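/- Let U_i = U_q^-(𝔤) ∩ T_i(U_q^-(𝔤)) and _iU = U_q^-(𝔤) ∩ T_i^{-1}(U_q^-(𝔤)). Then U_i is stable under the operators ad_{f_i} and ad_{e_i}, and _iU is stable under ad*_{f_i} and ad*_{e_i}. -/

import Mathlib

noncomputable section

open scoped TensorProduct

/-- The field `ℚ(q)` of rational functions. -/
abbrev KK : Type := RatFunc ℚ

/-- The indeterminate `q ∈ ℚ(q)`. -/
def qq : KK := RatFunc.X

/-- `q^m` for `m ∈ ℤ`. -/
def qpow (m : ℤ) : KK := qq ^ m

/-- The quantum integer `[n]_i = (q_i^n - q_i^{-n})/(q_i - q_i^{-1})` where `q_i = q^d`. -/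
def qint (d n : ℤ) : KK := (qpow (d * n) - qpow (-(d * n))) / (qpow d - qpow (-d))

/-- The quantum factorial `[n]_i!`. -/
def qfact (d : ℤ) : ℕ → KK
  | 0 => 1
  | n + 1 => qfact d n * qint d (n + 1)

/-- A symmetrizable generalized Cartan matrix `a` with symmetrizers `d i`, so that
`(α_i, α_j) = d i * a i j`. -/
structure CartanData (I : Type) : Type where
  a : I → I → ℤ
  d : I → ℤ
  d_pos : ∀ i, 0 < d i
  a_diag : ∀ i, a i i = 2
  a_offdiag : ∀ i j, i ≠ j → a i j ≤ 0
  symm : ∀ i j, d i * a i j = d j * a j i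

/-- Generators of the quantum group `U_q(𝔤)` (adjoint form: `t i = q^{(α_i,α_i)/2 · h_i}`). -/
inductive QGen (I : Type) : Type
  | e : I → QGen I
  | f : I → QGen I
  | t : I → QGen I
  | tinv : I → QGen I

variable {I : Type}

/-- The free algebra on the generators of `U_q(𝔤)`. -/
abbrev FA (I : Type) : Type := FreeAlgebra KK (QGen I)

def ge (i : I) : FA I := FreeAlgebra.ι KK (QGen.e i)
def gf (i : I) : FA I := FreeAlgebra.ι KK (QGen.f i)
def gT (i : I) : FA I := FreeAlgebra.ι KK (QGen.t i)
def gTinv (i : I) : FA I := FreeAlgebra.ι KK (QGen.tinv i)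

/-- Divided power `e_i^{(s)}` in the free algebra. -/
def edp (C : CartanData I) (i : I) (s : ℕ) : FA I := (qfact (C.d i) s)⁻¹ • ge i ^ s

/-- Divided power `f_i^{(s)}` in the free algebra. -/
def fdp (C : CartanData I) (i : I) (s : ℕ) : FA I := (qfact (C.d i) s)⁻¹ • gf i ^ s

/-- The quantum Serre element `Σ_{s} (-1)^s e_i^{(s)} e_j e_i^{(1-a_{ij}-s)}`. -/
def serreE (C : CartanData I) (i j : I) : FA I :=
  ∑ s ∈ Finset.range ((1 - C.a i j).toNat + 1),
    ((-1 : KK) ^ s) • (edp C i s * ge j * edp C i ((1 - C.a i j).toNat - s))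

/-- The quantum Serre element `Σ_{s} (-1)^s f_i^{(s)} f_j f_i^{(1-a_{ij}-s)}`. -/
def serreF (C : CartanData I) (i j : I) : FA I :=
  ∑ s ∈ Finset.range ((1 - C.a i j).toNat + 1),
    ((-1 : KK) ^ s) • (fdp C i s * gf j * fdp C i ((1 - C.a i j).toNat - s))

/-- The defining relations of the quantum group `U_q(𝔤)`. -/
inductive QRel [DecidableEq I] (C : CartanData I) : FA I → FA I → Prop
  | t_tinv (i : I) : QRel C (gT i * gTinv i) 1
  | tinv_t (i : I) : QRel C (gTinv i * gT i) 1
  | t_t (i j : I) : QRel C (gT i * gT j) (gT j * gT i)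
  | t_tinv_comm (i j : I) : QRel C (gT i * gTinv j) (gTinv j * gT i)
  | t_e (i j : I) : QRel C (gT i * ge j) (qpow (C.d i * C.a i j) • (ge j * gT i))
  | t_f (i j : I) : QRel C (gT i * gf j) (qpow (-(C.d i * C.a i j)) • (gf j * gT i))
  | e_f (i j : I) :
      QRel C (ge i * gf j - gf j * ge i)
        (if i = j then (qpow (C.d i) - qpow (-C.d i))⁻¹ • (gT i - gTinv i) else 0)
  | serre_e (i j : I) : i ≠ j → QRel C (serreE C i j) 0
  | serre_f (i j : I) : i ≠ j → QRel C (serreF C i j) 0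

/-- The quantum group `U_q(𝔤)`, presented by generators and relations. -/
abbrev Uq [DecidableEq I] (C : CartanData I) : Type := RingQuot (QRel C)

variable [DecidableEq I]

/-- The canonical map from the free algebra onto `U_q(𝔤)`. -/
def uMk (C : CartanData I) : FA I →ₐ[KK] Uq C := RingQuot.mkAlgHom KK (QRel C)

def uE (C : CartanData I) (i : I) : Uq C := uMk C (ge i)
def uF (C : CartanData I) (i : I) : Uq C := uMk C (gf i)
def uT (C : CartanData I) (i : I) : Uq C := uMk C (gT i)
def uTinv (C : CartanData I) (i : I) : Uq C := uMk C (gTinv i)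

/-- Divided power `e_i^{(s)} ∈ U_q(𝔤)`. -/
def uEdp (C : CartanData I) (i : I) (s : ℕ) : Uq C := (qfact (C.d i) s)⁻¹ • uE C i ^ s

/-- Divided power `f_i^{(s)} ∈ U_q(𝔤)`. -/
def uFdp (C : CartanData I) (i : I) (s : ℕ) : Uq C := (qfact (C.d i) s)⁻¹ • uF C i ^ s

/-- The negative half `U_q^-(𝔤)`, the subalgebra generated by the `f_i`. -/
def Uneg (C : CartanData I) : Subalgebra KK (Uq C) :=
  Algebra.adjoin KK (Set.range (uF C))

/-- The weight `-β` component of `U_q^-(𝔤)` (spanned by monomials in the `f_i` of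
content `β ∈ Q_+`). -/
def negWt (C : CartanData I) (β : I →₀ ℕ) : Submodule KK (Uq C) :=
  Submodule.span KK
    {u | ∃ w : List I, (∀ j, w.count j = β j) ∧ u = (w.map (uF C)).prod}

/-- The pairing `(α_i, β) = Σ_j β_j (α_i, α_j)` for `β ∈ Q_+`. -/
def pairB (C : CartanData I) (i : I) (β : I →₀ ℕ) : ℤ :=
  β.sum fun j m => C.d i * C.a i j * (m : ℤ)

/-- `f_j` as an element of the subalgebra `U_q^-(𝔤)`. -/
def uFneg (C : CartanData I) (j : I) : ↥(Uneg C) :=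
  ⟨uF C j, Algebra.subset_adjoin ⟨j, rfl⟩⟩

/-- `t_i^m` for `m ∈ ℤ`. -/
def tpow (C : CartanData I) (i : I) (m : ℤ) : Uq C :=
  if 0 ≤ m then uT C i ^ m.toNat else uTinv C i ^ (-m).toNat


/-- `ad_{f_i}(u) = f_i u - t_i u t_i^{-1} f_i`. -/
def adF (C : CartanData I) (i : I) (u : Uq C) : Uq C :=
  uF C i * u - uT C i * u * uTinv C i * uF C i

/-- `ad_{e_i}(u) = e_i u t_i - u e_i t_i`. -/
def adE (C : CartanData I) (i : I) (u : Uq C) : Uq C :=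
  uE C i * u * uT C i - u * uE C i * uT C i

/-- `ad*_{f_i}(u) = u f_i - f_i t_i u t_i^{-1}`. -/
def adFstar (C : CartanData I) (i : I) (u : Uq C) : Uq C :=
  u * uF C i - uF C i * uT C i * u * uTinv C i

/-- `ad*_{e_i}(u) = u e_i t_i^{-1} - e_i u t_i^{-1}`. -/
def adEstar (C : CartanData I) (i : I) (u : Uq C) : Uq C :=
  u * uE C i * uTinv C i - uE C i * u * uTinv C i

/-!
Write `N` for `U_q⁻(𝔤)` and `e, f, t, T` for `e_i, f_i, t_i, T_i`. Stability of `N ∩ T(N)` under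
`ad_f` and `ad_e` splits into four memberships. That `ad_f` preserves `N` is immediate. Since `T`
intertwines `ad_e` with the analogue of `ad_f` in which `t` is replaced by `t⁻¹`, it is equally
immediate that `T⁻¹(ad_e x) ∈ N` if `T⁻¹ x ∈ N`.

The point is that `ad_e x ∈ N` if `x` and `T⁻¹ x` are in `N`. Each `T f_j`, `j ≠ i`, is up to a
scalar the lowest vector of the `ad_f`-string through `f_j`, and `T f` is proportional to `e t`,
so `T(N) ⊆ N + A e` where `A = U_q(𝔤)`; by the previous paragraph this applies to `ad_e x`. On the
other hand `ad_e N ⊆ N t² + N`. Acting on the vacuum of Verma modules of varying highest weight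
shows that `N t² + N` is a direct sum that meets `A e` only in `0`, so the component of `ad_e x`
in `N t²` is `0`.

Finally `T⁻¹` is an operator of the same kind for the triple `(e, f, t⁻¹)` and `q⁻¹`. Applying the
argument to it gives `T⁻¹(ad_f x) ∈ N` and the stability under `ad*_f` and `ad*_e`.
-/

section QuantumIntegers

lemma qq_ne_zero : qq ≠ 0 := RatFunc.X_ne_zero

lemma qpow_add (m n : ℤ) : qpow (m + n) = qpow m * qpow n := zpow_add₀ qq_ne_zero m n

lemma qpow_neg (m : ℤ) : qpow (-m) = (qpow m)⁻¹ := zpow_neg qq m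

lemma qpow_pow (m : ℤ) (n : ℕ) : qpow m ^ n = qpow (m * n) := by
  rw [qpow, qpow, zpow_mul, zpow_natCast]

@[simp] lemma qpow_zero : qpow 0 = 1 := zpow_zero qq

lemma qpow_ne_zero (m : ℤ) : qpow m ≠ 0 := zpow_ne_zero m qq_ne_zero

lemma qpow_ne_one {m : ℤ} (hm : m ≠ 0) : qpow m ≠ 1 := by
  classical
  intro h
  have hval := congr_arg (RatFunc.inftyValuation ℚ) h
  rw [qpow, qq, RatFunc.inftyValuation.X_zpow, map_one] at hval
  exact hm (WithZero.exp_eq_one.mp hval)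

lemma qpow_sub_qpow_neg_ne_zero {m : ℤ} (hm : m ≠ 0) : qpow m - qpow (-m) ≠ 0 := by
  intro h
  refine qpow_ne_one (m := m + m) (by omega) ?_
  rw [qpow_add]
  nth_rewrite 1 [sub_eq_zero.mp h]
  rw [qpow_neg, inv_mul_cancel₀ (qpow_ne_zero m)]

@[simp] lemma qint_zero (d : ℤ) : qint d 0 = 0 := by simp [qint]

lemma qint_ne_zero {d n : ℤ} (hd : d ≠ 0) (hn : n ≠ 0) : qint d n ≠ 0 :=
  div_ne_zero (qpow_sub_qpow_neg_ne_zero (mul_ne_zero hd hn)) (qpow_sub_qpow_neg_ne_zero hd)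

lemma qfact_ne_zero {d : ℤ} (hd : d ≠ 0) (n : ℕ) : qfact d n ≠ 0 := by
  induction n with
  | zero => exact one_ne_zero
  | succ n ih => exact mul_ne_zero ih (qint_ne_zero hd (by omega))

lemma qpow_mul_qint_sub_add (d k r : ℤ) :
    qpow (d * r) * qint d (k - r) + qpow (d * (r - k)) * qint d r = qint d k := by
  simp only [qint, mul_div_assoc', ← add_div, mul_sub, ← qpow_add]
  ring_nf

end QuantumIntegers

section UnitConj

variable {A : Type*} [Ring A] [Algebra KK A]

/-- Conjugation `x ↦ t x t⁻¹` by a unit, as an algebra automorphism. -/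
def unitConj (t : Aˣ) : A ≃ₐ[KK] A :=
  MulSemiringAction.toAlgEquiv KK A (ConjAct.toConjAct t)

lemma unitConj_apply (t : Aˣ) (x : A) : unitConj t x = t * x * ↑t⁻¹ := rfl

lemma unitConj_mul_unit (t : Aˣ) (x : A) : unitConj t x * t = t * x := by
  rw [unitConj_apply, Units.inv_mul_cancel_right]

@[simp]
lemma unitConj_inv_unitConj (t : Aˣ) (x : A) : unitConj t⁻¹ (unitConj t x) = x := by
  simp [unitConj_apply, mul_assoc]

@[simp]
lemma unitConj_unitConj_inv (t : Aˣ) (x : A) : unitConj t (unitConj t⁻¹ x) = x := by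
  simp [unitConj_apply, mul_assoc]

lemma unitConj_eq_smul_iff {t : Aˣ} {x : A} {c : KK} :
    unitConj t x = c • x ↔ t * x = c • (x * t) := by
  rw [← unitConj_mul_unit, ← smul_mul_assoc, Units.mul_left_inj]

lemma unitConj_inv_eq_smul {t : Aˣ} {x : A} {c : KK} (hc : c ≠ 0) (h : unitConj t x = c • x) :
    unitConj t⁻¹ x = c⁻¹ • x := by
  rw [← inv_smul_smul₀ hc x, ← h, map_smul, unitConj_inv_unitConj, h, inv_smul_smul₀ hc]

lemma unitConj_eq_self {t : Aˣ} {x : A} (h : Commute (t : A) x) : unitConj t x = x := by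
  rw [unitConj_apply, h.eq, Units.mul_inv_cancel_right]

end UnitConj

section Adjoint

variable {A : Type*} [Ring A] [Algebra KK A]

/-- The operator `ad_f : y ↦ f y - t y t⁻¹ f`; with `t⁻¹` in place of `t` it is `-ad*_f`
precomposed with conjugation by `t⁻¹`. -/
def fAdjoint (f : A) (t : Aˣ) : Module.End KK A :=
  LinearMap.mulLeft KK f - LinearMap.mulRight KK f ∘ₗ (unitConj t).toLinearMap

/-- The operator `ad_e : y ↦ (e y - y e) t`; with `t⁻¹` in place of `t` it is `-ad*_e`. -/
def eAdjoint (e : A) (t : Aˣ) : Module.End KK A :=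
  LinearMap.mulRight KK (t : A) ∘ₗ (LinearMap.mulLeft KK e - LinearMap.mulRight KK e)

lemma fAdjoint_apply (f : A) (t : Aˣ) (y : A) : fAdjoint f t y = f * y - unitConj t y * f := rfl

lemma eAdjoint_apply (e : A) (t : Aˣ) (y : A) : eAdjoint e t y = (e * y - y * e) * t := rfl

lemma eAdjoint_mul (e : A) (t : Aˣ) (x y : A) :
    eAdjoint e t (x * y) = eAdjoint e t x * unitConj t⁻¹ y + x * eAdjoint e t y := by
  have hy : t * unitConj t⁻¹ y = y * t := by
    rw [← unitConj_mul_unit, unitConj_unitConj_inv]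
  simp only [eAdjoint_apply, mul_assoc, hy, sub_mul, mul_sub]
  abel

lemma eAdjoint_eq_zero_of_commute {e y : A} (h : Commute e y) (t : Aˣ) :
    eAdjoint e t y = 0 := by
  rw [eAdjoint_apply, h.eq, sub_self, zero_mul]

/-- The relations of `U_{q^d}(sl₂)` on a triple `(e, f, t)`. Negative `d` is allowed: the relations
are invariant under `q ↦ q⁻¹`, `t ↦ t⁻¹`, which exchanges `ad` and `ad*`. -/
structure QuantumSl2 (d : ℤ) (e f : A) (t : Aˣ) : Prop where
  conj_e : unitConj t e = qpow (2 * d) • e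
  conj_f : unitConj t f = qpow (-(2 * d)) • f
  bracket : e * f - f * e = (qpow d - qpow (-d))⁻¹ • ((t : A) - (↑t⁻¹ : A))

/-- `y` is killed by `ad_e` and has weight `m` under conjugation by `t`. -/
structure IsAdPrimitive (d : ℤ) (e : A) (t : Aˣ) (m : ℤ) (y : A) : Prop where
  conj : unitConj t y = qpow (d * m) • y
  comm : Commute e y

variable {d m : ℤ} {e f y : A} {t : Aˣ}

lemma QuantumSl2.inv (h : QuantumSl2 d e f t) : QuantumSl2 (-d) e f t⁻¹ where
  conj_e := by
    rw [unitConj_inv_eq_smul (qpow_ne_zero _) h.conj_e, ← qpow_neg, mul_neg]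
  conj_f := by
    rw [unitConj_inv_eq_smul (qpow_ne_zero _) h.conj_f, ← qpow_neg, mul_neg]
  bracket := by
    rw [h.bracket, inv_inv, neg_neg, ← neg_sub (qpow d), inv_neg, ← neg_sub (t : A), neg_smul_neg]

lemma IsAdPrimitive.inv (hy : IsAdPrimitive d e t m y) : IsAdPrimitive (-d) e t⁻¹ m y where
  conj := by
    rw [unitConj_inv_eq_smul (qpow_ne_zero _) hy.conj, ← qpow_neg, neg_mul]
  comm := hy.comm

namespace QuantumSl2

lemma e_mul_unit (h : QuantumSl2 d e f t) : e * t = qpow (-(2 * d)) • (t * e) := by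
  rw [unitConj_eq_smul_iff.mp h.conj_e, smul_smul, ← qpow_add, neg_add_cancel, qpow_zero, one_smul]

lemma unitConj_fAdjoint (h : QuantumSl2 d e f t) (y : A) :
    unitConj t (fAdjoint f t y) = qpow (-(2 * d)) • fAdjoint f t (unitConj t y) := by
  simp only [fAdjoint_apply, map_sub, map_mul, h.conj_f, smul_mul_assoc, mul_smul_comm, smul_sub]

lemma eAdjoint_fAdjoint (h : QuantumSl2 d e f t) (y : A) :
    eAdjoint e t (fAdjoint f t y) = fAdjoint f t (eAdjoint e t y) +
      (qpow d - qpow (-d))⁻¹ • (unitConj t y - unitConj t⁻¹ y) := by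
  have conj_eAdjoint : unitConj t (eAdjoint e t y) * f =
      (e * unitConj t y - unitConj t y * e) * f * t := by
    have htf : (t : A) * f = qpow (-(2 * d)) • (f * t) := unitConj_eq_smul_iff.mp h.conj_f
    simp only [eAdjoint_apply, map_mul, map_sub, h.conj_e, unitConj_eq_self (Commute.refl (t : A)),
      mul_assoc, htf, smul_mul_assoc, mul_smul_comm, ← smul_sub, smul_smul, ← qpow_add,
      add_neg_cancel, qpow_zero, one_smul]
  have bracket_conj : ((t : A) - (↑t⁻¹ : A)) * y * t - unitConj t y * ((t : A) - (↑t⁻¹ : A)) * t =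
      unitConj t y - unitConj t⁻¹ y := by
    rw [mul_sub, unitConj_mul_unit, sub_mul, sub_mul, sub_mul, Units.inv_mul_cancel_right,
      unitConj_apply t⁻¹, inv_inv]
    abel
  calc eAdjoint e t (fAdjoint f t y)
      = f * eAdjoint e t y - (e * unitConj t y - unitConj t y * e) * f * t +
          ((e * f - f * e) * y * t - unitConj t y * (e * f - f * e) * t) := by
        simp only [eAdjoint_apply, fAdjoint_apply]
        noncomm_ring
    _ = fAdjoint f t (eAdjoint e t y) +
          (qpow d - qpow (-d))⁻¹ • (unitConj t y - unitConj t⁻¹ y) := by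
        rw [fAdjoint_apply, conj_eAdjoint, h.bracket]
        simp only [smul_mul_assoc, mul_smul_comm, ← smul_sub, bracket_conj]

lemma unitConj_fAdjoint_pow (h : QuantumSl2 d e f t) (hy : unitConj t y = qpow (d * m) • y)
    (k : ℕ) :
    unitConj t ((fAdjoint f t ^ k) y) = qpow (d * (m - 2 * k)) • (fAdjoint f t ^ k) y := by
  induction k with
  | zero => simpa using hy
  | succ k ih =>
    rw [pow_succ', Module.End.mul_apply, h.unitConj_fAdjoint, ih, map_smul, smul_smul, ← qpow_add]
    congr 2
    push_cast
    ring

end QuantumSl2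
end Adjoint

lemma qint_mul_qint_add (d m k : ℤ) :
    qint d k * qint d (m - k + 1) + qint d (m - 2 * k) = qint d (k + 1) * qint d (m - k) := by
  rcases eq_or_ne (qpow d - qpow (-d)) 0 with h | h
  · simp [qint, h]
  · simp only [qint]
    field_simp
    simp only [sub_mul, mul_sub, ← qpow_add]
    ring_nf

lemma qint_mul_qpow_split (d m k r : ℤ) :
    qint d (k + 1) * qpow (d * r * (m - k)) =
      qpow (d * r * (m + 1 - k)) * qint d (k + 1 - r) +
        qpow (d * (r - 1) * (m + 1 - k)) * qpow (d * (m - 2 * k)) * qint d r := by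
  have exponent_left : d * r * (m + 1 - k) = d * r + d * r * (m - k) := by ring
  have exponent_right : d * (r - 1) * (m + 1 - k) + d * (m - 2 * k) =
      d * (r - (k + 1)) + d * r * (m - k) := by ring
  rw [← qpow_mul_qint_sub_add d (k + 1) r, exponent_left, ← qpow_add _ (d * (m - 2 * k)),
    exponent_right, qpow_add, qpow_add]
  ring

section AdjointPowers

variable {A : Type*} [Ring A] [Algebra KK A] {d m : ℤ} {e f y : A} {t : Aˣ}

lemma QuantumSl2.eAdjoint_fAdjoint_pow_succ (h : QuantumSl2 d e f t)
    (hy : IsAdPrimitive d e t m y) (k : ℕ) :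
    eAdjoint e t ((fAdjoint f t ^ (k + 1)) y) =
      (qint d (k + 1) * qint d (m - k)) • (fAdjoint f t ^ k) y := by
  have unitConj_sub (k : ℕ) : (qpow d - qpow (-d))⁻¹ •
      (unitConj t ((fAdjoint f t ^ k) y) - unitConj t⁻¹ ((fAdjoint f t ^ k) y)) =
        qint d (m - 2 * k) • (fAdjoint f t ^ k) y := by
    have hK := h.unitConj_fAdjoint_pow hy.conj k
    rw [unitConj_inv_eq_smul (qpow_ne_zero _) hK, hK, ← sub_smul, smul_smul, ← qpow_neg, qint,
      div_eq_inv_mul]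
  rw [pow_succ', Module.End.mul_apply, h.eAdjoint_fAdjoint, unitConj_sub]
  induction k with
  | zero =>
    have hm := qint_mul_qint_add d m 0
    rw [qint_zero, zero_mul, zero_add] at hm
    simpa [eAdjoint_eq_zero_of_commute hy.comm] using congr_arg (· • y) hm
  | succ k ih =>
    rw [pow_succ', Module.End.mul_apply (fAdjoint f t), h.eAdjoint_fAdjoint, unitConj_sub, ih,
      map_smul, ← add_smul]
    push_cast
    rw [← qint_mul_qint_add d m (k + 1), sub_add_eq_sub_sub, sub_add_cancel]

lemma QuantumSl2.exists_eAdjoint_pow_fAdjoint_pow (h : QuantumSl2 d e f t) (hd : d ≠ 0)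
    (hy : IsAdPrimitive d e t m y) {k : ℕ} (hk : k ≤ m) :
    ∃ c : KK, c ≠ 0 ∧ (eAdjoint e t ^ k) ((fAdjoint f t ^ k) y) = c • y := by
  induction k with
  | zero => exact ⟨1, one_ne_zero, by simp⟩
  | succ k ih =>
    obtain ⟨c, hc, hcy⟩ := ih (by omega)
    refine ⟨qint d (k + 1) * qint d (m - k) * c, mul_ne_zero (mul_ne_zero (qint_ne_zero hd ?_)
      (qint_ne_zero hd ?_)) hc, ?_⟩
    · omega
    · omega
    · rw [pow_succ, Module.End.mul_apply, h.eAdjoint_fAdjoint_pow_succ hy, map_smul, hcy, smul_smul]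

/-- The divided power `f^(n) = fⁿ / [n]!`. -/
def dividedPower (d : ℤ) (f : A) (n : ℕ) : A := (qfact d n)⁻¹ • f ^ n

lemma mul_dividedPower (hd : d ≠ 0) (f : A) (n : ℕ) :
    f * dividedPower d f n = qint d (n + 1) • dividedPower d f (n + 1) := by
  have hn : qint d (n + 1) ≠ 0 := qint_ne_zero hd (by omega)
  rw [dividedPower, dividedPower, mul_smul_comm, smul_smul, ← pow_succ', qfact, mul_inv_rev,
    mul_inv_cancel_left₀ hn]

lemma dividedPower_mul (hd : d ≠ 0) (f : A) (n : ℕ) :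
    dividedPower d f n * f = qint d (n + 1) • dividedPower d f (n + 1) := by
  rw [← mul_dividedPower hd, dividedPower, smul_mul_assoc, mul_smul_comm, ← pow_succ, pow_succ']

@[simp]
lemma dividedPower_zero (d : ℤ) (f : A) : dividedPower d f 0 = 1 := by
  simp [dividedPower, qfact]

lemma map_dividedPower {B : Type*} [Ring B] [Algebra KK B] (φ : A →ₐ[KK] B) (d : ℤ) (f : A)
    (n : ℕ) : φ (dividedPower d f n) = dividedPower d (φ f) n := by
  rw [dividedPower, map_smul, map_pow, dividedPower]

/-- The sum `∑ (-1)ʳ q^(d r c) f^(k-r) y f^(r)`, which is `ad_f^k y / [k]!` when `y` has weight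
`m` and `c = m + 1 - k`. -/
def twistedDividedPower (d c : ℤ) (f y : A) (k : ℕ) : A :=
  ∑ p ∈ Finset.HasAntidiagonal.antidiagonal k,
    ((-1) ^ p.1 * qpow (d * p.1 * c)) • (dividedPower d f p.2 * y * dividedPower d f p.1)

lemma unitConj_dividedPower (hf : unitConj t f = qpow (-(2 * d)) • f) (n : ℕ) :
    unitConj t (dividedPower d f n) = qpow (-(2 * d * n)) • dividedPower d f n := by
  rw [dividedPower, map_smul, map_pow, hf, smul_pow, qpow_pow, neg_mul, smul_comm]

lemma fAdjoint_monomial (hd : d ≠ 0) (hf : unitConj t f = qpow (-(2 * d)) • f)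
    (hy : unitConj t y = qpow (d * m) • y) (a b : ℕ) :
    fAdjoint f t (dividedPower d f a * y * dividedPower d f b) =
      qint d (a + 1) • (dividedPower d f (a + 1) * y * dividedPower d f b) -
      (qpow (d * (m - 2 * (a + b))) * qint d (b + 1)) •
        (dividedPower d f a * y * dividedPower d f (b + 1)) := by
  have conj_monomial : unitConj t (dividedPower d f a * y * dividedPower d f b) =
      qpow (d * (m - 2 * (a + b))) • (dividedPower d f a * y * dividedPower d f b) := by
    rw [map_mul, map_mul, unitConj_dividedPower hf, unitConj_dividedPower hf, hy,
      smul_mul_smul_comm, smul_mul_smul_comm, ← qpow_add, ← qpow_add]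
    congr 2
    ring
  rw [fAdjoint_apply, conj_monomial, ← mul_assoc, ← mul_assoc, mul_dividedPower hd, smul_mul_assoc,
    smul_mul_assoc, smul_mul_assoc, mul_assoc _ (dividedPower d f b), dividedPower_mul hd,
    mul_smul_comm, smul_smul]

lemma fAdjoint_twistedDividedPower (hd : d ≠ 0) (hf : unitConj t f = qpow (-(2 * d)) • f)
    (hy : unitConj t y = qpow (d * m) • y) (k : ℕ) :
    fAdjoint f t (twistedDividedPower d (m + 1 - k) f y k) =
      qint d (k + 1) • twistedDividedPower d (m - k) f y (k + 1) := by
  let leftCoeff (p : ℕ × ℕ) : KK := (-1) ^ p.1 * qpow (d * p.1 * (m + 1 - k)) * qint d p.2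
  let rightCoeff (p : ℕ × ℕ) : KK :=
    (-1) ^ p.1 * qpow (d * (p.1 - 1) * (m + 1 - k)) * qpow (d * (m - 2 * k)) * qint d p.1
  let monomial (p : ℕ × ℕ) : A := dividedPower d f p.2 * y * dividedPower d f p.1
  have coeff_split (p : ℕ × ℕ) (hp : p ∈ Finset.HasAntidiagonal.antidiagonal (k + 1)) :
      qint d (k + 1) * ((-1) ^ p.1 * qpow (d * p.1 * (m - k))) = leftCoeff p + rightCoeff p := by
    have hk : (p.2 : ℤ) = k + 1 - p.1 := by
      have := Finset.HasAntidiagonal.mem_antidiagonal.mp hp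
      omega
    simp only [leftCoeff, rightCoeff, hk]
    rw [mul_left_comm, qint_mul_qpow_split]
    ring
  symm
  calc qint d (k + 1) • twistedDividedPower d (m - k) f y (k + 1)
      = ∑ p ∈ Finset.HasAntidiagonal.antidiagonal (k + 1),
          (leftCoeff p • monomial p + rightCoeff p • monomial p) := by
        rw [twistedDividedPower, Finset.smul_sum]
        refine Finset.sum_congr rfl fun p hp => ?_
        rw [smul_smul, coeff_split p hp, add_smul]
    _ = ∑ p ∈ Finset.HasAntidiagonal.antidiagonal k,
          (leftCoeff (p.1, p.2 + 1) • monomial (p.1, p.2 + 1) +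
            rightCoeff (p.1 + 1, p.2) • monomial (p.1 + 1, p.2)) := by
        rw [Finset.sum_add_distrib, Finset.Nat.sum_antidiagonal_succ',
          Finset.Nat.sum_antidiagonal_succ, Finset.sum_add_distrib]
        simp [leftCoeff, rightCoeff]
    _ = fAdjoint f t (twistedDividedPower d (m + 1 - k) f y k) := by
        rw [twistedDividedPower, map_sum]
        refine Finset.sum_congr rfl fun p hp => ?_
        have hk : (p.2 : ℤ) + p.1 = k := by
          have := Finset.HasAntidiagonal.mem_antidiagonal.mp hp
          omega
        rw [map_smul, fAdjoint_monomial hd hf hy, smul_sub, smul_smul, smul_smul, hk,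
          sub_eq_add_neg, ← neg_smul]
        simp only [leftCoeff, rightCoeff, monomial]
        push_cast
        congr 2
        rw [add_sub_cancel_right, pow_succ]
        ring

lemma fAdjoint_pow_eq (hd : d ≠ 0) (hf : unitConj t f = qpow (-(2 * d)) • f)
    (hy : unitConj t y = qpow (d * m) • y) (k : ℕ) :
    (fAdjoint f t ^ k) y = qfact d k • twistedDividedPower d (m + 1 - k) f y k := by
  induction k with
  | zero => simp [twistedDividedPower, qfact]
  | succ k ih =>
    rw [pow_succ', Module.End.mul_apply, ih, map_smul, fAdjoint_twistedDividedPower hd hf hy,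
      smul_smul, qfact]
    push_cast
    rw [add_sub_add_right_eq_sub]

end AdjointPowers

section FOrbit

variable {A : Type*} [Ring A] [Algebra KK A]

/-- `x` is an eigenvector of conjugation by `t`, with eigenvalue a power of `q`. -/
def IsWeightVector (t : Aˣ) (x : A) : Prop :=
  ∃ m : ℤ, unitConj t x = qpow m • x

lemma IsWeightVector.inv {t : Aˣ} {x : A} : IsWeightVector t x → IsWeightVector t⁻¹ x :=
  fun ⟨m, hm⟩ => ⟨-m, by rw [unitConj_inv_eq_smul (qpow_ne_zero m) hm, qpow_neg]⟩

lemma unitConj_mem_adjoin {t : Aˣ} {S : Set A} (hS : ∀ s ∈ S, IsWeightVector t s) {x : A}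
    (hx : x ∈ Algebra.adjoin KK S) : unitConj t x ∈ Algebra.adjoin KK S := by
  refine (Algebra.adjoin_le ?_ : _ ≤ (Algebra.adjoin KK S).comap (unitConj t).toAlgHom) hx
  intro s hs
  obtain ⟨m, hm⟩ := hS s hs
  have hmem := Subalgebra.smul_mem _ (Algebra.subset_adjoin hs) (qpow m)
  rwa [← hm] at hmem

lemma skewDerivation_mem_adjoin {δ : Module.End KK A} {σ τ : A → A} {S : Set A}
    (hδ : ∀ x y, δ (x * y) = δ x * σ y + τ x * δ y) (hδ_one : δ 1 = 0)
    (hσ : ∀ x ∈ Algebra.adjoin KK S, σ x ∈ Algebra.adjoin KK S)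
    (hτ : ∀ x ∈ Algebra.adjoin KK S, τ x ∈ Algebra.adjoin KK S)
    (hδS : ∀ s ∈ S, δ s ∈ Algebra.adjoin KK S) {x : A} (hx : x ∈ Algebra.adjoin KK S) :
    δ x ∈ Algebra.adjoin KK S := by
  induction hx using Algebra.adjoin_induction with
  | mem s hs => exact hδS s hs
  | algebraMap r =>
    rw [Algebra.algebraMap_eq_smul_one, map_smul, hδ_one, smul_zero]
    exact zero_mem _
  | add x y _ _ ihx ihy => exact map_add δ x y ▸ add_mem ihx ihy
  | mul x y hx hy ihx ihy =>
    exact hδ x y ▸ add_mem (mul_mem ihx (hσ y hy)) (mul_mem (hτ x hx) ihy)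

/-- The subalgebra generated by the orbits of `S` under the powers of `ad_f`. For `S` consisting of
`ad_e`-primitive vectors it is stable under `ad_e`. -/
def fOrbitAlgebra (f : A) (t : Aˣ) (S : Set A) : Subalgebra KK A :=
  Algebra.adjoin KK {x | ∃ s ∈ S, ∃ k : ℕ, (fAdjoint f t ^ k) s = x}

variable {d : ℤ} {e f : A} {t : Aˣ} {S : Set A}

lemma fAdjoint_pow_mem_fOrbitAlgebra {s : A} (hs : s ∈ S) (k : ℕ) :
    (fAdjoint f t ^ k) s ∈ fOrbitAlgebra f t S :=
  Algebra.subset_adjoin ⟨s, hs, k, rfl⟩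

lemma fOrbitAlgebra_le {N : Subalgebra KK A} (hS : S ⊆ N) (hN : ∀ x ∈ N, fAdjoint f t x ∈ N) :
    fOrbitAlgebra f t S ≤ N := by
  refine Algebra.adjoin_le ?_
  rintro _ ⟨s, hs, k, rfl⟩
  induction k with
  | zero => exact hS hs
  | succ k ih => exact pow_succ' (fAdjoint f t) k ▸ hN _ ih

/-- `V + A e` for a subalgebra `V`. -/
def plusLeftIdeal (V : Subalgebra KK A) (e : A) : Submodule KK A :=
  Subalgebra.toSubmodule V ⊔ LinearMap.range (LinearMap.mulRight KK e)

lemma mem_plusLeftIdeal {V : Subalgebra KK A} {x : A} :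
    x ∈ plusLeftIdeal V e ↔ ∃ v ∈ V, ∃ z, v + z * e = x := by
  simp [plusLeftIdeal, Submodule.mem_sup]

lemma mul_mem_plusLeftIdeal {V : Subalgebra KK A} {v x : A} (hv : v ∈ V)
    (hx : x ∈ plusLeftIdeal V e) : v * x ∈ plusLeftIdeal V e := by
  obtain ⟨w, hw, z, rfl⟩ := mem_plusLeftIdeal.mp hx
  exact mem_plusLeftIdeal.mpr ⟨v * w, mul_mem hv hw, v * z, by rw [mul_add, mul_assoc]⟩

namespace QuantumSl2

lemma isWeightVector_fAdjoint_pow (h : QuantumSl2 d e f t)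
    (hS : ∀ s ∈ S, ∃ m, IsAdPrimitive d e t m s) :
    ∀ x ∈ {x | ∃ s ∈ S, ∃ k : ℕ, (fAdjoint f t ^ k) s = x}, IsWeightVector t x := by
  rintro _ ⟨s, hs, k, rfl⟩
  obtain ⟨m, hm⟩ := hS s hs
  exact ⟨_, h.unitConj_fAdjoint_pow hm.conj k⟩

lemma unitConj_mem_fOrbitAlgebra (h : QuantumSl2 d e f t)
    (hS : ∀ s ∈ S, ∃ m, IsAdPrimitive d e t m s) {x : A} (hx : x ∈ fOrbitAlgebra f t S) :
    unitConj t x ∈ fOrbitAlgebra f t S :=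
  unitConj_mem_adjoin (h.isWeightVector_fAdjoint_pow hS) hx

lemma eAdjoint_mem_fOrbitAlgebra (h : QuantumSl2 d e f t)
    (hS : ∀ s ∈ S, ∃ m, IsAdPrimitive d e t m s) {x : A} (hx : x ∈ fOrbitAlgebra f t S) :
    eAdjoint e t x ∈ fOrbitAlgebra f t S := by
  have conj_inv_mem (x : A) (hx : x ∈ fOrbitAlgebra f t S) :
      unitConj t⁻¹ x ∈ fOrbitAlgebra f t S :=
    unitConj_mem_adjoin (fun y hy => (h.isWeightVector_fAdjoint_pow hS y hy).inv) hx
  refine skewDerivation_mem_adjoin (eAdjoint_mul e t) (by simp [eAdjoint_apply])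
    conj_inv_mem (fun _ => id) ?_ hx
  rintro _ ⟨s, hs, k, rfl⟩
  obtain ⟨m, hm⟩ := hS s hs
  cases k with
  | zero => exact eAdjoint_eq_zero_of_commute hm.comm t ▸ zero_mem _
  | succ k =>
    rw [h.eAdjoint_fAdjoint_pow_succ hm]
    exact Subalgebra.smul_mem _ (fAdjoint_pow_mem_fOrbitAlgebra hs k) _

lemma e_mul_unit_mul_mem (h : QuantumSl2 d e f t) (hS : ∀ s ∈ S, ∃ m, IsAdPrimitive d e t m s)
    {x : A} (hx : x ∈ plusLeftIdeal (fOrbitAlgebra f t S) e) :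
    e * t * x ∈ plusLeftIdeal (fOrbitAlgebra f t S) e := by
  obtain ⟨v, hv, z, rfl⟩ := mem_plusLeftIdeal.mp hx
  have conj_mem := h.unitConj_mem_fOrbitAlgebra hS hv
  refine mem_plusLeftIdeal.mpr ⟨_, h.eAdjoint_mem_fOrbitAlgebra hS conj_mem,
    qpow (-(2 * d)) • (unitConj t v * t) + e * t * z, ?_⟩
  rw [eAdjoint_apply, mul_add, mul_assoc e (t : A) v, ← unitConj_mul_unit t v, add_mul,
    smul_mul_assoc, mul_assoc (unitConj t v), ← mul_smul_comm, ← h.e_mul_unit]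
  noncomm_ring

end QuantumSl2
end FOrbit

section RankOneBraid

variable {A : Type*} [Ring A] [Algebra KK A]

/-- An automorphism acting on the triple `(e, f, t)` as Lusztig's braid operator, rescaled by `c`,
and sending each primitive vector of `S` to a multiple of the lowest vector of its `ad`-string.
The scalar makes the notion closed under inversion. -/
structure RankOneBraid (d : ℤ) (c : KK) (e f : A) (t : Aˣ) (S : Set A) (T : A ≃ₐ[KK] A) : Prop where
  map_e : T e = -c⁻¹ • (↑t⁻¹ * f)
  map_f : T f = -c • (e * t)
  map_t : T t = ↑t⁻¹
  map_primitive : ∀ s ∈ S, ∃ m : ℕ, IsAdPrimitive d e t m s ∧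
    ∃ b : KK, b ≠ 0 ∧ T s = b • (fAdjoint f t ^ m) s

namespace RankOneBraid

variable {d : ℤ} {c : KK} {e f : A} {t : Aˣ} {S : Set A} {T : A ≃ₐ[KK] A}

lemma isAdPrimitive (hT : RankOneBraid d c e f t S T) : ∀ s ∈ S, ∃ m, IsAdPrimitive d e t m s :=
  fun s hs => let ⟨m, hm, _⟩ := hT.map_primitive s hs; ⟨m, hm⟩

lemma map_t_inv (hT : RankOneBraid d c e f t S T) : T (↑t⁻¹ : A) = t := by
  rw [← Units.mul_inv_eq_one, ← congr_arg (T (↑t⁻¹ : A) * ·) hT.map_t, ← map_mul, Units.inv_mul,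
    map_one]

lemma map_unitConj (hT : RankOneBraid d c e f t S T) (u : A) :
    T (unitConj t u) = unitConj t⁻¹ (T u) := by
  rw [unitConj_apply, map_mul, map_mul, hT.map_t, hT.map_t_inv, unitConj_apply, inv_inv]

lemma map_unitConj_inv (hT : RankOneBraid d c e f t S T) (u : A) :
    T (unitConj t⁻¹ u) = unitConj t (T u) := by
  rw [← unitConj_unitConj_inv t (T _), ← hT.map_unitConj, unitConj_unitConj_inv]

lemma map_fAdjoint (hT : RankOneBraid d c e f t S T) (u : A) :
    T (fAdjoint f t⁻¹ u) = -c • eAdjoint e t (unitConj t (T u)) := by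
  rw [fAdjoint_apply, map_sub, map_mul, map_mul, hT.map_unitConj_inv, hT.map_f, eAdjoint_apply,
    smul_mul_assoc, mul_smul_comm, ← smul_sub, sub_mul, mul_assoc, mul_assoc e,
    ← unitConj_mul_unit, mul_assoc (unitConj t _) e]

lemma exists_map_fAdjoint_pow (hT : RankOneBraid d c e f t S T) (h : QuantumSl2 d e f t)
    (hc : c ≠ 0) {u : A} {m : ℤ} (hu : unitConj t⁻¹ u = qpow (-d * m) • u) (k : ℕ) :
    ∃ b : KK, b ≠ 0 ∧ T ((fAdjoint f t⁻¹ ^ k) u) = b • (eAdjoint e t ^ k) (T u) := by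
  induction k with
  | zero => exact ⟨1, one_ne_zero, by simp⟩
  | succ k ih =>
    obtain ⟨b, hb, hk⟩ := ih
    refine ⟨-c * (qpow (-d * (m - 2 * k)) * b), by simp [hc, hb, qpow_ne_zero], ?_⟩
    rw [pow_succ', pow_succ', Module.End.mul_apply, hT.map_fAdjoint, ← hT.map_unitConj_inv,
      h.inv.unitConj_fAdjoint_pow hu, map_smul, hk, map_smul, map_smul, smul_smul, smul_smul,
      Module.End.mul_apply, mul_assoc]

lemma symm (hT : RankOneBraid d c e f t S T) (h : QuantumSl2 d e f t) (hd : d ≠ 0) (hc : c ≠ 0) :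
    RankOneBraid (-d) (qpow (-(2 * d)) * c) e f t⁻¹ S T.symm where
  map_e := by
    have conj_e : ↑t⁻¹ * (e * t) = qpow (-(2 * d)) • e := by
      rw [← inv_inv t, ← mul_assoc, inv_inv, ← unitConj_apply,
        unitConj_inv_eq_smul (qpow_ne_zero _) h.conj_e, qpow_neg]
    rw [AlgEquiv.symm_apply_eq, map_smul, map_mul, inv_inv, hT.map_f, hT.map_t, mul_smul_comm,
      conj_e, smul_smul, smul_smul]
    have scalar : -(qpow (-(2 * d)) * c)⁻¹ * -c * qpow (-(2 * d)) = 1 := by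
      field_simp [qpow_ne_zero]
    rw [scalar, one_smul]
  map_f := by
    have conj_f : ↑t⁻¹ * f * t = qpow (2 * d) • f := by
      rw [← inv_inv t, inv_inv, ← unitConj_apply,
        unitConj_inv_eq_smul (qpow_ne_zero _) h.conj_f, qpow_neg, inv_inv]
    rw [AlgEquiv.symm_apply_eq, map_smul, map_mul, hT.map_e, hT.map_t_inv, smul_mul_assoc,
      conj_f, smul_smul, smul_smul]
    simp [hc, qpow_ne_zero, qpow_neg]
  map_t := by
    rw [AlgEquiv.symm_apply_eq, inv_inv, hT.map_t]
  map_primitive s hs := by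
    obtain ⟨m, hm, b, hb, hTs⟩ := hT.map_primitive s hs
    obtain ⟨b₁, hb₁, map_pow⟩ := hT.exists_map_fAdjoint_pow h hc hm.inv.conj m
    obtain ⟨b₂, hb₂, e_f_pow⟩ := h.exists_eAdjoint_pow_fAdjoint_pow hd hm le_rfl
    have hb' : b₁ * b * b₂ ≠ 0 := mul_ne_zero (mul_ne_zero hb₁ hb) hb₂
    refine ⟨m, hm.inv, (b₁ * b * b₂)⁻¹, inv_ne_zero hb', ?_⟩
    rw [AlgEquiv.symm_apply_eq, map_smul, map_pow, hTs, map_smul, e_f_pow, eq_inv_smul_iff₀ hb',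
      mul_smul, mul_smul]

end RankOneBraid
end RankOneBraid

section StableIntersection

variable {A : Type*} [Ring A] [Algebra KK A] {d : ℤ} {c : KK} {e f : A} {t : Aˣ} {S : Set A}
  {T : A ≃ₐ[KK] A}

/-- `N t² + N` meets the left ideal `A e` only in `0`, and `N t²` meets `N` only in `0`. -/
def TorusIndependent (e : A) (t : Aˣ) (N : Subalgebra KK A) : Prop :=
  ∀ X ∈ N, ∀ Y ∈ N, ∀ z, X * (t : A) ^ 2 + Y = z * e → X = 0 ∧ Y = 0

namespace QuantumSl2

lemma torusIndependent_inv (h : QuantumSl2 d e f t) {N : Subalgebra KK A}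
    (hN : TorusIndependent e t N) : TorusIndependent e t⁻¹ N := by
  intro X hX Y hY z hz
  have e_mul_sq : e * (t : A) ^ 2 = (qpow (-(2 * d)) ^ 2 • (t : A) ^ 2) * e := by
    rw [pow_two, ← mul_assoc, h.e_mul_unit, smul_mul_assoc, mul_assoc, h.e_mul_unit, mul_smul_comm,
      smul_smul, pow_two, smul_mul_assoc, mul_assoc]
  have hz' : Y * (t : A) ^ 2 + X = (z * (qpow (-(2 * d)) ^ 2 • (t : A) ^ 2)) * e := by
    rw [mul_assoc, ← e_mul_sq, ← mul_assoc, ← hz, add_mul, mul_assoc X, ← Units.val_pow_eq_pow_val,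
      ← Units.val_pow_eq_pow_val, inv_pow, Units.inv_mul, mul_one, add_comm]
  exact (hN Y hY X hX _ hz').symm

lemma isWeightVector_of_mem_insert (h : QuantumSl2 d e f t)
    (hS : ∀ s ∈ S, ∃ m, IsAdPrimitive d e t m s) : ∀ x ∈ insert f S, IsWeightVector t x := by
  rintro x (rfl | hx)
  · exact ⟨_, h.conj_f⟩
  · exact (hS x hx).elim fun m hm => ⟨_, hm.conj⟩

lemma fAdjoint_mem_adjoin (h : QuantumSl2 d e f t) (hS : ∀ s ∈ S, ∃ m, IsAdPrimitive d e t m s)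
    {x : A} (hx : x ∈ Algebra.adjoin KK (insert f S)) :
    fAdjoint f t x ∈ Algebra.adjoin KK (insert f S) := by
  have hf : f ∈ Algebra.adjoin KK (insert f S) := Algebra.subset_adjoin (Set.mem_insert f S)
  have conj_mem := unitConj_mem_adjoin (h.isWeightVector_of_mem_insert hS) hx
  exact sub_mem (mul_mem hf hx) (mul_mem conj_mem hf)

lemma fOrbitAlgebra_le_adjoin (h : QuantumSl2 d e f t)
    (hS : ∀ s ∈ S, ∃ m, IsAdPrimitive d e t m s) :
    fOrbitAlgebra f t S ≤ Algebra.adjoin KK (insert f S) :=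
  fOrbitAlgebra_le ((Set.subset_insert f S).trans Algebra.subset_adjoin)
    fun _ => h.fAdjoint_mem_adjoin hS

lemma exists_bracket_eq (h : QuantumSl2 d e f t) (hS : ∀ s ∈ S, ∃ m, IsAdPrimitive d e t m s)
    {x : A} (hx : x ∈ Algebra.adjoin KK (insert f S)) :
    ∃ X ∈ Algebra.adjoin KK (insert f S), ∃ Y ∈ Algebra.adjoin KK (insert f S),
      e * x - x * e = X * (t : A) + Y * (↑t⁻¹ : A) := by
  have hweight := h.isWeightVector_of_mem_insert hS
  induction hx using Algebra.adjoin_induction with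
  | mem x hx =>
    rcases hx with rfl | hx
    · let κ : KK := (qpow d - qpow (-d))⁻¹
      refine ⟨algebraMap KK A κ, Subalgebra.algebraMap_mem _ _, algebraMap KK A (-κ),
        Subalgebra.algebraMap_mem _ _, ?_⟩
      rw [h.bracket, ← Algebra.smul_def, ← Algebra.smul_def, neg_smul, ← sub_eq_add_neg, smul_sub]
    · obtain ⟨m, hm⟩ := hS x hx
      exact ⟨0, zero_mem _, 0, zero_mem _, by rw [hm.comm.eq, sub_self]; simp⟩
  | algebraMap r =>
    exact ⟨0, zero_mem _, 0, zero_mem _, by rw [Algebra.commutes, sub_self]; simp⟩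
  | add x y _ _ ihx ihy =>
    obtain ⟨X, hX, Y, hY, hXY⟩ := ihx
    obtain ⟨X', hX', Y', hY', hXY'⟩ := ihy
    refine ⟨X + X', add_mem hX hX', Y + Y', add_mem hY hY', ?_⟩
    rw [mul_add, add_mul x y, add_sub_add_comm, hXY, hXY', add_mul, add_mul, add_add_add_comm]
  | mul x y hx hy ihx ihy =>
    obtain ⟨X, hX, Y, hY, hXY⟩ := ihx
    obtain ⟨X', hX', Y', hY', hXY'⟩ := ihy
    refine ⟨X * unitConj t y + x * X',
      add_mem (mul_mem hX (unitConj_mem_adjoin hweight hy)) (mul_mem hx hX'),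
      Y * unitConj t⁻¹ y + x * Y',
      add_mem (mul_mem hY (unitConj_mem_adjoin (fun s hs => (hweight s hs).inv) hy))
        (mul_mem hx hY'), ?_⟩
    calc e * (x * y) - x * y * e
        = (e * x - x * e) * y + x * (e * y - y * e) := by noncomm_ring
      _ = X * (t * y) + Y * (↑t⁻¹ * y) + x * (X' * t + Y' * ↑t⁻¹) := by
          rw [hXY, hXY', add_mul, mul_assoc, mul_assoc]
      _ = (X * unitConj t y + x * X') * t + (Y * unitConj t⁻¹ y + x * Y') * ↑t⁻¹ := by
          rw [← unitConj_mul_unit, ← unitConj_mul_unit]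
          noncomm_ring

end QuantumSl2

namespace RankOneBraid

lemma map_mem_plusLeftIdeal (hT : RankOneBraid d c e f t S T) (h : QuantumSl2 d e f t) {u : A}
    (hu : u ∈ Algebra.adjoin KK (insert f S)) :
    T u ∈ plusLeftIdeal (fOrbitAlgebra f t S) e := by
  have mul_mem_of_mem : ∀ x ∈ plusLeftIdeal (fOrbitAlgebra f t S) e,
      T u * x ∈ plusLeftIdeal (fOrbitAlgebra f t S) e := by
    induction hu using Algebra.adjoin_induction with
    | mem g hg =>
      intro x hx
      rcases hg with rfl | hg
      · rw [hT.map_f, smul_mul_assoc]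
        exact Submodule.smul_mem _ _ (h.e_mul_unit_mul_mem hT.isAdPrimitive hx)
      · obtain ⟨m, -, b, -, hTg⟩ := hT.map_primitive g hg
        rw [hTg]
        exact mul_mem_plusLeftIdeal
          (Subalgebra.smul_mem _ (fAdjoint_pow_mem_fOrbitAlgebra hg m) b) hx
    | algebraMap r =>
      intro x hx
      rw [AlgEquiv.commutes, ← Algebra.smul_def]
      exact Submodule.smul_mem _ r hx
    | add u v _ _ ihu ihv =>
      intro x hx
      rw [map_add, add_mul]
      exact add_mem (ihu x hx) (ihv x hx)
    | mul u v _ _ ihu ihv =>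
      intro x hx
      rw [map_mul, mul_assoc]
      exact ihu _ (ihv x hx)
  have one_mem_plus : (1 : A) ∈ plusLeftIdeal (fOrbitAlgebra f t S) e :=
    mem_plusLeftIdeal.mpr ⟨1, one_mem _, 0, by simp⟩
  simpa using mul_mem_of_mem 1 one_mem_plus

lemma symm_eAdjoint_mem (hT : RankOneBraid d c e f t S T) (h : QuantumSl2 d e f t) (hc : c ≠ 0)
    {x : A} (hTx : T.symm x ∈ Algebra.adjoin KK (insert f S)) :
    T.symm (eAdjoint e t x) ∈ Algebra.adjoin KK (insert f S) := by
  have hS := hT.isAdPrimitive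
  have hu : fAdjoint f t⁻¹ (unitConj t (T.symm x)) ∈ Algebra.adjoin KK (insert f S) :=
    h.inv.fAdjoint_mem_adjoin (fun s hs => (hS s hs).imp fun _ hm => hm.inv)
      (unitConj_mem_adjoin (h.isWeightVector_of_mem_insert hS) hTx)
  have map_u : T (fAdjoint f t⁻¹ (unitConj t (T.symm x))) = -c • eAdjoint e t x := by
    rw [hT.map_fAdjoint, hT.map_unitConj, AlgEquiv.apply_symm_apply, unitConj_unitConj_inv]
  have symm_eq : T.symm (eAdjoint e t x) =
      (-c)⁻¹ • fAdjoint f t⁻¹ (unitConj t (T.symm x)) := by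
    rw [AlgEquiv.symm_apply_eq, map_smul, map_u, inv_smul_smul₀ (neg_ne_zero.mpr hc)]
  exact symm_eq ▸ Subalgebra.smul_mem _ hu _

-- `T⁻¹ (ad_e x) ∈ N` puts `ad_e x` in `N + A e`, while `ad_e N ⊆ N t² + N`.
lemma eAdjoint_mem (hT : RankOneBraid d c e f t S T) (h : QuantumSl2 d e f t) (hc : c ≠ 0)
    (hind : TorusIndependent e t (Algebra.adjoin KK (insert f S))) {x : A}
    (hx : x ∈ Algebra.adjoin KK (insert f S)) (hTx : T.symm x ∈ Algebra.adjoin KK (insert f S)) :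
    eAdjoint e t x ∈ Algebra.adjoin KK (insert f S) := by
  have hS := hT.isAdPrimitive
  have mem_plus := hT.map_mem_plusLeftIdeal h (hT.symm_eAdjoint_mem h hc hTx)
  rw [AlgEquiv.apply_symm_apply] at mem_plus
  obtain ⟨v, hv, z, hvz⟩ := mem_plusLeftIdeal.mp mem_plus
  obtain ⟨X, hX, Y, hY, hXY⟩ := h.exists_bracket_eq hS hx
  have eq_sq : eAdjoint e t x = X * (t : A) ^ 2 + Y := by
    rw [eAdjoint_apply, hXY, add_mul, Units.inv_mul_cancel_right, mul_assoc, ← pow_two]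
  have sub_eq : X * (t : A) ^ 2 + (Y - v) = z * e := by
    rw [← add_sub_assoc, ← eq_sq, ← hvz, add_sub_cancel_left]
  obtain ⟨rfl, -⟩ := hind X hX (Y - v) (sub_mem hY (h.fOrbitAlgebra_le_adjoin hS hv)) z sub_eq
  rwa [eq_sq, zero_mul, zero_add]

lemma symm_fAdjoint_mem (hT : RankOneBraid d c e f t S T) (h : QuantumSl2 d e f t) (hd : d ≠ 0)
    (hc : c ≠ 0) (hind : TorusIndependent e t (Algebra.adjoin KK (insert f S))) {x : A}
    (hx : x ∈ Algebra.adjoin KK (insert f S)) (hTx : T.symm x ∈ Algebra.adjoin KK (insert f S)) :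
    T.symm (fAdjoint f t x) ∈ Algebra.adjoin KK (insert f S) := by
  have hweight := h.isWeightVector_of_mem_insert hT.isAdPrimitive
  have hT' := hT.symm h hd hc
  have hc' : qpow (-(2 * d)) * c ≠ 0 := mul_ne_zero (qpow_ne_zero _) hc
  have map_conj_mem : T (unitConj t⁻¹ (T.symm x)) ∈ Algebra.adjoin KK (insert f S) := by
    rw [hT.map_unitConj_inv, AlgEquiv.apply_symm_apply]
    exact unitConj_mem_adjoin hweight hx
  have hmem := hT'.eAdjoint_mem h.inv hc' (h.torusIndependent_inv hind)
    (unitConj_mem_adjoin (fun s hs => (hweight s hs).inv) hTx) map_conj_mem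
  have symm_eq := hT'.map_fAdjoint x
  rw [inv_inv] at symm_eq
  exact symm_eq ▸ Subalgebra.smul_mem _ hmem _

end RankOneBraid
end StableIntersection

section CartanRelations

variable {A : Type*} [Ring A] [Algebra KK A]

lemma bracket_fAdjoint {e f y : A} {t : Aˣ} {n : ℤ} (hef : Commute e f)
    (he : unitConj t e = qpow n • e) :
    e * fAdjoint f t y - fAdjoint f t y * e =
      f * (e * y - y * e) - qpow (-n) • (unitConj t (e * y - y * e) * f) := by
  have conj_bracket : qpow (-n) • unitConj t (e * y - y * e) =
      e * unitConj t y - unitConj t y * e := by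
    rw [map_sub, map_mul, map_mul, he, smul_mul_assoc, mul_smul_comm, ← smul_sub, smul_smul,
      ← qpow_add, neg_add_cancel, qpow_zero, one_smul]
  rw [← smul_mul_assoc, conj_bracket, fAdjoint_apply]
  simp only [mul_sub, sub_mul, mul_assoc, hef.eq]
  simp only [← mul_assoc, hef.eq]
  abel

lemma mul_pow_mul_sub_unitConj {f z : A} {t : Aˣ} {d b c : ℤ}
    (hf : unitConj t f = qpow (-(2 * d)) • f) (hz : unitConj t z = z)
    (hzf : z * f = qpow b • (f * z)) (l : ℕ) :
    f * (f ^ l * z) - qpow c • (unitConj t (f ^ l * z) * f) =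
      (1 - qpow (c + b - 2 * d * l)) • (f ^ (l + 1) * z) := by
  have conj_pow : unitConj t (f ^ l * z) * f = qpow (b - 2 * d * l) • (f ^ (l + 1) * z) := by
    rw [map_mul, map_pow, hf, hz, smul_pow, qpow_pow, smul_mul_assoc, smul_mul_assoc, mul_assoc,
      hzf, mul_smul_comm, smul_smul, ← qpow_add, ← mul_assoc, ← pow_succ]
    ring_nf
  rw [conj_pow, smul_smul, ← qpow_add, sub_smul, one_smul, ← mul_assoc, ← pow_succ',
    add_sub_assoc]

/-- The relations of `U_q(𝔤)` other than the Serre relations. -/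
structure CartanRelations {ι : Type} (C : CartanData ι) (e f : ι → A) (t : ι → Aˣ) : Prop where
  commute_t (i j : ι) : Commute (t i : A) (t j)
  conj_e (i j : ι) : unitConj (t i) (e j) = qpow (C.d i * C.a i j) • e j
  conj_f (i j : ι) : unitConj (t i) (f j) = qpow (-(C.d i * C.a i j)) • f j
  bracket_self (i : ι) :
    e i * f i - f i * e i = (qpow (C.d i) - qpow (-C.d i))⁻¹ • ((t i : A) - (↑(t i)⁻¹ : A))
  commute_e_f (i j : ι) : i ≠ j → Commute (e i) (f j)

/-- The Serre element `∑ₛ (-1)ˢ f_i⁽ˢ⁾ f_j f_i⁽ᵏ⁻ˢ⁾`, `k = 1 - a_ij`, of a family `f`. -/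
def serreElement {ι : Type} (C : CartanData ι) (f : ι → A) (i j : ι) : A :=
  ∑ s ∈ Finset.range ((1 - C.a i j).toNat + 1), ((-1 : KK) ^ s) •
    (dividedPower (C.d i) (f i) s * f j * dividedPower (C.d i) (f i) ((1 - C.a i j).toNat - s))

lemma map_serreElement {B : Type*} [Ring B] [Algebra KK B] {ι : Type} (C : CartanData ι)
    (φ : A →ₐ[KK] B) (f : ι → A) (i j : ι) :
    φ (serreElement C f i j) = serreElement C (fun k => φ (f k)) i j := by
  simp only [serreElement, map_sum, map_smul, map_mul, map_dividedPower]

lemma twistedDividedPower_zero_eq (d : ℤ) (f y : A) (k : ℕ) :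
    twistedDividedPower d 0 f y k = (-1 : KK) ^ k • ∑ s ∈ Finset.range (k + 1),
      ((-1 : KK) ^ s) • (dividedPower d f s * y * dividedPower d f (k - s)) := by
  rw [← Finset.Nat.sum_antidiagonal_eq_sum_range_succ
    (fun a b => ((-1 : KK) ^ a) • (dividedPower d f a * y * dividedPower d f b)),
    ← Finset.Nat.sum_antidiagonal_swap, twistedDividedPower, Finset.smul_sum]
  refine Finset.sum_congr rfl fun p hp => ?_
  have sign : (-1 : KK) ^ k * (-1) ^ p.2 = (-1) ^ p.1 := by
    rw [← Finset.HasAntidiagonal.mem_antidiagonal.mp hp, pow_add, mul_assoc, ← mul_pow,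
      neg_one_mul, neg_neg, one_pow, mul_one]
  rw [mul_zero, qpow_zero, mul_one, smul_smul, Prod.fst_swap, Prod.snd_swap, sign]

namespace CartanRelations

variable {ι : Type} {C : CartanData ι} {e f : ι → A} {t : ι → Aˣ}

lemma quantumSl2 (h : CartanRelations C e f t) (i : ι) :
    QuantumSl2 (C.d i) (e i) (f i) (t i) where
  conj_e := by rw [h.conj_e, C.a_diag, mul_comm]
  conj_f := by rw [h.conj_f, C.a_diag, mul_comm]
  bracket := h.bracket_self i

lemma isAdPrimitive (h : CartanRelations C e f t) {i j : ι} (hij : i ≠ j) :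
    IsAdPrimitive (C.d i) (e i) (t i) (-C.a i j) (f j) where
  conj := by rw [h.conj_f, mul_neg]
  comm := h.commute_e_f i j hij

/-- The Chevalley involution `e ↔ f`, `t ↦ t⁻¹`. -/
lemma swap (h : CartanRelations C e f t) : CartanRelations C f e fun i => (t i)⁻¹ where
  commute_t i j := (h.commute_t i j).units_inv_left.units_inv_right
  conj_e i j := by
    rw [unitConj_inv_eq_smul (qpow_ne_zero _) (h.conj_f i j), qpow_neg, inv_inv]
  conj_f i j := by
    rw [unitConj_inv_eq_smul (qpow_ne_zero _) (h.conj_e i j), qpow_neg]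
  bracket_self i := by
    rw [← neg_sub, h.bracket_self, inv_inv, ← smul_neg, neg_sub]
  commute_e_f i j hij := (h.commute_e_f j i hij.symm).symm

lemma exists_serreElement_eq (h : CartanRelations C e f t) {i j : ι} (hij : i ≠ j) :
    ∃ c : KK, serreElement C f i j =
      c • (fAdjoint (f i) (t i) ^ (1 - C.a i j).toNat) (f j) := by
  have hk : (((1 - C.a i j).toNat : ℕ) : ℤ) = -C.a i j + 1 := by
    have := C.a_offdiag i j hij
    omega
  have hd : C.d i ≠ 0 := (C.d_pos i).ne'
  have pow_eq := fAdjoint_pow_eq hd (h.quantumSl2 i).conj_f (h.isAdPrimitive hij).conj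
    (1 - C.a i j).toNat
  rw [hk, sub_self, twistedDividedPower_zero_eq, ← serreElement, smul_smul] at pow_eq
  exact ⟨_, (eq_inv_smul_iff₀ (mul_ne_zero (qfact_ne_zero hd _) (by simp))).mpr pow_eq.symm⟩

lemma bracket_fAdjoint_pow (h : CartanRelations C e f t) {i j : ι} (hij : i ≠ j) (l : ℕ) :
    e j * (fAdjoint (f i) (t i) ^ l) (f j) - (fAdjoint (f i) (t i) ^ l) (f j) * e j =
      (qpow (C.d j) - qpow (-C.d j))⁻¹ •
        ((∏ r ∈ Finset.range l, (1 - qpow (-(2 * C.d i * (C.a i j + r))))) • (f i ^ l * t j) -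
          (∏ r ∈ Finset.range l, (1 - qpow (-(2 * C.d i * r)))) • (f i ^ l * ↑(t j)⁻¹)) := by
  have t_mul_f : (t j : A) * f i = qpow (-(C.d i * C.a i j)) • (f i * t j) := by
    rw [unitConj_eq_smul_iff.mp (h.conj_f j i), C.symm]
  have t_inv_mul_f : ↑(t j)⁻¹ * f i = qpow (C.d i * C.a i j) • (f i * ↑(t j)⁻¹) :=
    unitConj_eq_smul_iff.mp (by rw [h.swap.conj_e j i, C.symm])
  induction l with
  | zero => simpa using h.bracket_self j
  | succ l ih =>
    have hf := (h.quantumSl2 i).conj_f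
    rw [pow_succ', Module.End.mul_apply,
      bracket_fAdjoint (h.commute_e_f j i hij.symm) (h.conj_e i j), ih]
    have step_t := mul_pow_mul_sub_unitConj (c := -(C.d i * C.a i j)) hf
      (unitConj_eq_self (h.commute_t i j)) t_mul_f l
    have step_t_inv := mul_pow_mul_sub_unitConj (c := -(C.d i * C.a i j)) hf
      (unitConj_eq_self (h.commute_t i j).units_inv_right) t_inv_mul_f l
    have exponent_t : -(C.d i * C.a i j) + -(C.d i * C.a i j) - 2 * C.d i * l =
        -(2 * C.d i * (C.a i j + l)) := by ring
    have exponent_t_inv : -(C.d i * C.a i j) + C.d i * C.a i j - 2 * C.d i * l =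
        -(2 * C.d i * l) := by ring
    rw [exponent_t] at step_t
    rw [exponent_t_inv] at step_t_inv
    rw [Finset.prod_range_succ, Finset.prod_range_succ, mul_smul, mul_smul, ← step_t, ← step_t_inv]
    simp only [mul_smul_comm, mul_sub, map_smul, map_sub, smul_mul_assoc, sub_mul, smul_sub]
    simp only [smul_comm (qpow (-(C.d i * C.a i j)))]
    abel

lemma commute_fAdjoint_pow (h : CartanRelations C e f t) {i j : ι} (hij : i ≠ j) (k : ι) :
    Commute (e k) ((fAdjoint (f i) (t i) ^ (1 - C.a i j).toNat) (f j)) := by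
  have ha := C.a_offdiag i j hij
  obtain ⟨m, hm⟩ : ∃ m : ℕ, C.a i j = -m := ⟨(-C.a i j).toNat, by omega⟩
  have hk : (1 - C.a i j).toNat = m + 1 := by omega
  rw [hk, commute_iff_eq, ← sub_eq_zero]
  rcases eq_or_ne k i with rfl | hki
  · have ad_eq_zero := (h.quantumSl2 k).eAdjoint_fAdjoint_pow_succ (h.isAdPrimitive hij) m
    rwa [hm, neg_neg, sub_self, qint_zero, mul_zero, zero_smul, eAdjoint_apply,
      Units.mul_left_eq_zero] at ad_eq_zero
  rcases eq_or_ne k j with rfl | hkj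
  · have prod_t : ∏ r ∈ Finset.range (m + 1), (1 - qpow (-(2 * C.d i * (C.a i k + r)))) = 0 :=
      Finset.prod_eq_zero (Finset.self_mem_range_succ m) (by simp [hm])
    have prod_t_inv : ∏ r ∈ Finset.range (m + 1), (1 - qpow (-(2 * C.d i * r))) = 0 :=
      Finset.prod_eq_zero (Finset.mem_range.mpr m.succ_pos) (by simp)
    rw [h.bracket_fAdjoint_pow hij, prod_t, prod_t_inv, zero_smul, zero_smul, sub_zero, smul_zero]
  · generalize m + 1 = l
    induction l with
    | zero => exact sub_eq_zero.mpr (h.commute_e_f k j hkj)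
    | succ l ih =>
      rw [pow_succ', Module.End.mul_apply, bracket_fAdjoint (h.commute_e_f k i hki) (h.conj_e i k),
        ih, mul_zero, map_zero, zero_mul, smul_zero, sub_zero]

lemma commute_serreElement (h : CartanRelations C e f t) {i j : ι} (hij : i ≠ j) (k : ι) :
    Commute (e k) (serreElement C f i j) := by
  obtain ⟨c, hc⟩ := h.exists_serreElement_eq hij
  exact hc ▸ (h.commute_fAdjoint_pow hij k).smul_right c

end CartanRelations
end CartanRelations

section FreeModule

variable {ι : Type}

lemma mem_of_one_mem_of_ι_mul_mem {S : Submodule KK (FreeAlgebra KK ι)} (one_mem : 1 ∈ S)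
    (mul_mem : ∀ j, ∀ x ∈ S, FreeAlgebra.ι KK j * x ∈ S) (x : FreeAlgebra KK ι) : x ∈ S := by
  suffices h : ∀ y ∈ S, x * y ∈ S by simpa using h 1 one_mem
  induction x using FreeAlgebra.induction with
  | grade0 r => exact fun y hy => Algebra.smul_def r y ▸ S.smul_mem r hy
  | grade1 j => exact mul_mem j
  | mul a b iha ihb => exact fun y hy => mul_assoc a b y ▸ iha _ (ihb y hy)
  | add a b iha ihb => exact fun y hy => add_mul a b y ▸ S.add_mem (iha y hy) (ihb y hy)

lemma eq_zero_of_commute_mulLeft {P : Module.End KK (FreeAlgebra KK ι)} (P_one : P 1 = 0)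
    (hP : ∀ j, Commute (LinearMap.mulLeft KK (FreeAlgebra.ι KK j)) P) : P = 0 := by
  refine LinearMap.ext fun x => mem_of_one_mem_of_ι_mul_mem (S := LinearMap.ker P) P_one ?_ x
  intro j x hx
  have hjx := LinearMap.congr_fun (hP j) x
  rw [Module.End.mul_apply, Module.End.mul_apply, LinearMap.mem_ker.mp hx, map_zero] at hjx
  exact hjx.symm

/-- The torus action on the free algebra on the `f_j`, seen as a Verma module: `(c, χ)` acts on the
vacuum `1` by `c` and rescales `f_j` by `χ j`. -/
def torusAction : KKˣ × (ι → KKˣ) →* Module.End KK (FreeAlgebra KK ι) where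
  toFun g := (g.1 : KK) •
    (FreeAlgebra.lift KK fun j => (g.2 j : KK) • FreeAlgebra.ι KK j).toLinearMap
  map_one' := by
    have lift_ι : FreeAlgebra.lift KK (fun j : ι => FreeAlgebra.ι KK j) = AlgHom.id KK _ :=
      FreeAlgebra.hom_ext (funext fun j => FreeAlgebra.lift_ι_apply _ j)
    simp only [Prod.fst_one, Prod.snd_one, Pi.one_apply, Units.val_one, one_smul, lift_ι]
    rfl
  map_mul' g g' := by
    have lift_mul : (FreeAlgebra.lift KK fun j => ((g * g').2 j : KK) • FreeAlgebra.ι KK j) =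
        (FreeAlgebra.lift KK fun j => (g.2 j : KK) • FreeAlgebra.ι KK j).comp
          (FreeAlgebra.lift KK fun j => (g'.2 j : KK) • FreeAlgebra.ι KK j) := by
      ext j
      simp only [Function.comp_apply, AlgHom.comp_apply, FreeAlgebra.lift_ι_apply, map_smul,
        smul_smul, Prod.snd_mul, Pi.mul_apply, Units.val_mul, mul_comm]
    rw [lift_mul, Prod.fst_mul, Units.val_mul, mul_smul, AlgHom.comp_toLinearMap,
      smul_mul_assoc, mul_smul_comm]
    rfl

lemma torusAction_apply (g : KKˣ × (ι → KKˣ)) (x : FreeAlgebra KK ι) : torusAction g x =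
    (g.1 : KK) • FreeAlgebra.lift KK (fun j => (g.2 j : KK) • FreeAlgebra.ι KK j) x := rfl

lemma torusAction_one (g : KKˣ × (ι → KKˣ)) : torusAction g 1 = (g.1 : KK) • 1 := by
  rw [torusAction_apply, map_one]

lemma torusAction_ι_mul (g : KKˣ × (ι → KKˣ)) (j : ι) (x : FreeAlgebra KK ι) :
    torusAction g (FreeAlgebra.ι KK j * x) =
      (g.2 j : KK) • (FreeAlgebra.ι KK j * torusAction g x) := by
  rw [torusAction_apply, map_mul, FreeAlgebra.lift_ι_apply, smul_mul_assoc, smul_comm,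
    torusAction_apply, mul_smul_comm]

/-- The operator `E` with `E 1 = 0` and `[E, f_j] = H j`; it is the off-diagonal entry of the action
of the free algebra on pairs in which `f_j` acts by `(x, y) ↦ (f_j x, f_j y + H j x)`. -/
def bracketLift (H : ι → Module.End KK (FreeAlgebra KK ι)) : Module.End KK (FreeAlgebra KK ι) :=
  LinearMap.snd KK _ _ ∘ₗ LinearMap.applyₗ (1, 0) ∘ₗ
    AlgHom.toLinearMap (FreeAlgebra.lift KK fun j =>
      LinearMap.prodMap (LinearMap.mulLeft KK (FreeAlgebra.ι KK j))
        (LinearMap.mulLeft KK (FreeAlgebra.ι KK j)) +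
      LinearMap.inr KK _ _ ∘ₗ H j ∘ₗ LinearMap.fst KK _ _)

lemma bracketLift_one (H : ι → Module.End KK (FreeAlgebra KK ι)) : bracketLift H 1 = 0 := by
  simp [bracketLift]

lemma bracketLift_ι_mul (H : ι → Module.End KK (FreeAlgebra KK ι)) (j : ι)
    (x : FreeAlgebra KK ι) : bracketLift H (FreeAlgebra.ι KK j * x) =
      FreeAlgebra.ι KK j * bracketLift H x + H j x := by
  let Φ := FreeAlgebra.lift KK fun j =>
    LinearMap.prodMap (LinearMap.mulLeft KK (FreeAlgebra.ι KK j))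
      (LinearMap.mulLeft KK (FreeAlgebra.ι KK j)) +
    LinearMap.inr KK (FreeAlgebra KK ι) _ ∘ₗ H j ∘ₗ LinearMap.fst KK _ _
  have fst_lift (u : FreeAlgebra KK ι) : ∀ p, (Φ u p).1 = u * p.1 := by
    induction u using FreeAlgebra.induction with
    | grade0 r => simp [Algebra.smul_def]
    | grade1 j => simp [Φ]
    | mul a b iha ihb => intro p; rw [map_mul, Module.End.mul_apply, iha, ihb, mul_assoc]
    | add a b iha ihb =>
      intro p; rw [map_add, LinearMap.add_apply, Prod.fst_add, iha, ihb, add_mul]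
  have lift_one_fst := fst_lift x (1, 0)
  rw [mul_one] at lift_one_fst
  change (Φ (FreeAlgebra.ι KK j * x) (1, 0)).2 = _ * (Φ x (1, 0)).2 + _
  have Φ_ι_apply (p : FreeAlgebra KK ι × FreeAlgebra KK ι) :
      (Φ (FreeAlgebra.ι KK j) p).2 = FreeAlgebra.ι KK j * p.2 + H j p.1 := by simp [Φ]
  rw [map_mul, Module.End.mul_apply, Φ_ι_apply, lift_one_fst]

lemma torusAction_mul_bracketLift {H : ι → Module.End KK (FreeAlgebra KK ι)}
    {g : KKˣ × (ι → KKˣ)} {b : KK} (hH : ∀ j, Commute (torusAction g) (H j))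
    (hb : ∀ j, (b * (g.2 j : KK)) • H j = H j) :
    torusAction g * bracketLift H = b • (bracketLift H * torusAction g) := by
  refine LinearMap.ext (mem_of_one_mem_of_ι_mul_mem (S := LinearMap.eqLocus _ _) ?_ ?_)
  · simp [LinearMap.mem_eqLocus, bracketLift_one, torusAction_one]
  · intro j x hx
    have hHx := LinearMap.congr_fun (hH j) x
    have hbx := LinearMap.congr_fun (hb j) (torusAction g x)
    simp only [LinearMap.mem_eqLocus, Module.End.mul_apply, LinearMap.smul_apply] at hx hHx hbx ⊢
    rw [bracketLift_ι_mul, map_add, torusAction_ι_mul, hx, hHx, torusAction_ι_mul, map_smul,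
      bracketLift_ι_mul, smul_smul, smul_add, hbx, mul_smul_comm, smul_smul, mul_comm b]

end FreeModule

section QuotientRep

variable {R A M : Type*} [CommRing R] [Ring A] [Algebra R A] [AddCommGroup M] [Module R M]

/-- The representation on `M ⧸ J` induced by a representation on `M` that leaves `J` invariant. -/
def quotientRep (ρ : A →ₐ[R] Module.End R M) (J : Submodule R M) (hJ : ∀ a, J ≤ J.comap (ρ a)) :
    A →ₐ[R] Module.End R (M ⧸ J) where
  toFun a := J.mapQ J (ρ a) (hJ a)
  map_one' := J.linearMap_qext (by ext x; simp)
  map_mul' a b := J.linearMap_qext (by ext x; simp)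
  map_zero' := J.linearMap_qext (by ext x; simp)
  map_add' a b := J.linearMap_qext (by ext x; simp)
  commutes' r := J.linearMap_qext (by ext x; simp [Module.algebraMap_end_apply])

lemma quotientRep_mkQ (ρ : A →ₐ[R] Module.End R M) (J : Submodule R M)
    (hJ : ∀ a, J ≤ J.comap (ρ a)) (a : A) (x : M) :
    quotientRep ρ J hJ a (J.mkQ x) = J.mkQ (ρ a x) := rfl

lemma sq_smul_apply_add_apply_eq_zero (ρ : A →ₐ[R] Module.End R M) {v : M} {c : R}
    {X Y z e t : A} (ht : ρ t v = c • v) (he : ρ e v = 0) (h : X * t ^ 2 + Y = z * e) :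
    c ^ 2 • ρ X v + ρ Y v = 0 := by
  have act_h := LinearMap.congr_fun (congrArg ρ h) v
  simpa only [pow_two, map_add, map_mul, LinearMap.add_apply, Module.End.mul_apply, ht, he,
    map_smul, map_zero, smul_smul] using act_h

end QuotientRep

section VermaModule

variable {ι : Type} (C : CartanData ι)

/-- The Serre ideal of the free algebra on the `f_j`, as a subspace. -/
def serreSubmodule : Submodule KK (FreeAlgebra KK ι) :=
  Submodule.span KK
    {z | ∃ i j, i ≠ j ∧ ∃ x y, x * serreElement C (FreeAlgebra.ι KK) i j * y = z}

variable {C} in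
lemma mul_serreElement_mul_mem {i j : ι} (hij : i ≠ j) (x y : FreeAlgebra KK ι) :
    x * serreElement C (FreeAlgebra.ι KK) i j * y ∈ serreSubmodule C :=
  Submodule.subset_span ⟨i, j, hij, x, y, rfl⟩

variable {C} in
lemma serreSubmodule_le {S : Submodule KK (FreeAlgebra KK ι)}
    (hS : ∀ i j, i ≠ j → ∀ x y, x * serreElement C (FreeAlgebra.ι KK) i j * y ∈ S) :
    serreSubmodule C ≤ S :=
  Submodule.span_le.mpr fun _ ⟨i, j, hij, x, y, h⟩ => h ▸ hS i j hij x y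

lemma serreElement_mulLeft (i j : ι) :
    serreElement C (fun k => LinearMap.mulLeft KK (FreeAlgebra.ι KK k)) i j =
      LinearMap.mulLeft KK (serreElement C (FreeAlgebra.ι KK) i j) :=
  (map_serreElement C (Algebra.lmul KK (FreeAlgebra KK ι)) (FreeAlgebra.ι KK) i j).symm

lemma serreElement_smul {A : Type*} [Ring A] [Algebra KK A] (χ : ι → KK) (f : ι → A) (i j : ι) :
    serreElement C (fun k => χ k • f k) i j =
      (χ i ^ (1 - C.a i j).toNat * χ j) • serreElement C f i j := by
  rw [serreElement, serreElement, Finset.smul_sum]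
  refine Finset.sum_congr rfl fun s hs => ?_
  obtain ⟨m, hm⟩ := Nat.exists_eq_add_of_le (Finset.mem_range_succ_iff.mp hs)
  rw [hm, Nat.add_sub_cancel_left]
  simp only [dividedPower, smul_pow, mul_smul_comm, smul_mul_assoc, smul_smul]
  ring_nf

lemma serreElement_apply_eq_zero {M : Type*} [AddCommGroup M] [Module KK M]
    {E : ι → Module.End KK M} {v : M} (hv : ∀ i, E i v = 0) (i j : ι) :
    serreElement C E i j v = 0 := by
  rw [serreElement, LinearMap.sum_apply]
  refine Finset.sum_eq_zero fun s _ => ?_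
  rcases (1 - C.a i j).toNat - s with _ | n
  · simp [dividedPower, hv]
  · simp [dividedPower, pow_succ, hv]

lemma serreSubmodule_le_comap_mulLeft (u : FreeAlgebra KK ι) :
    serreSubmodule C ≤ (serreSubmodule C).comap (LinearMap.mulLeft KK u) :=
  serreSubmodule_le fun i j hij x y => by
    rw [Submodule.mem_comap, LinearMap.mulLeft_apply, ← mul_assoc, ← mul_assoc]
    exact mul_serreElement_mul_mem hij (u * x) y

lemma serreSubmodule_le_comap_torusAction (g : KKˣ × (ι → KKˣ)) :
    serreSubmodule C ≤ (serreSubmodule C).comap (torusAction g) :=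
  serreSubmodule_le fun i j hij x y => by
    simp only [Submodule.mem_comap, torusAction_apply, map_mul, map_serreElement,
      FreeAlgebra.lift_ι_apply]
    rw [serreElement_smul C (fun k => (g.2 k : KK)), mul_smul_comm, smul_mul_assoc]
    exact Submodule.smul_mem _ _ (Submodule.smul_mem _ _ (mul_serreElement_mul_mem hij _ _))

/-- The action of `t_i` on the Verma module whose vacuum has `t_i`-weight `c` for all `i`. -/
def vermaTorus (c : KKˣ) (i : ι) : (Module.End KK (FreeAlgebra KK ι))ˣ :=
  torusAction.toHomUnits
    (c, fun j => Units.mk0 (qpow (-(C.d i * C.a i j))) (qpow_ne_zero _))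

lemma commute_vermaTorus (c : KKˣ) (i j : ι) :
    Commute (vermaTorus C c i : Module.End KK (FreeAlgebra KK ι)) (vermaTorus C c j) :=
  (Commute.all _ _).map torusAction

lemma serreSubmodule_le_comap_vermaTorus_inv (c : KKˣ) (i : ι) :
    serreSubmodule C ≤ (serreSubmodule C).comap (vermaTorus C c i)⁻¹.val := by
  rw [vermaTorus, ← map_inv]
  exact serreSubmodule_le_comap_torusAction C _

variable [DecidableEq ι]

/-- The value of the commutator `[e_i, f_j]` on the Verma module. -/
def vermaBracket (c : KKˣ) (i : ι) : ι → Module.End KK (FreeAlgebra KK ι) :=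
  Pi.single i ((qpow (C.d i) - qpow (-C.d i))⁻¹ •
    ((vermaTorus C c i : Module.End KK (FreeAlgebra KK ι)) - ↑(vermaTorus C c i)⁻¹))

/-- The action of `e_i` on the Verma module whose vacuum has `t_i`-weight `c` for all `i`. -/
def vermaRaising (c : KKˣ) (i : ι) : Module.End KK (FreeAlgebra KK ι) :=
  bracketLift (vermaBracket C c i)

lemma commute_vermaTorus_vermaBracket (c : KKˣ) (i j k : ι) :
    Commute (vermaTorus C c i : Module.End KK (FreeAlgebra KK ι)) (vermaBracket C c j k) := by
  rw [vermaBracket]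
  rcases eq_or_ne k j with rfl | hkj
  · rw [Pi.single_eq_same]
    have comm := commute_vermaTorus C c i k
    exact (comm.sub_right comm.units_inv_right).smul_right _
  · rw [Pi.single_eq_of_ne hkj]
    exact Commute.zero_right _

lemma vermaTorus_mul_vermaRaising (c : KKˣ) (i j : ι) :
    (vermaTorus C c i : Module.End KK (FreeAlgebra KK ι)) * vermaRaising C c j =
      qpow (C.d i * C.a i j) • (vermaRaising C c j * vermaTorus C c i) := by
  refine torusAction_mul_bracketLift (commute_vermaTorus_vermaBracket C c i j) fun k => ?_
  rcases eq_or_ne k j with rfl | hkj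
  · rw [Units.val_mk0, ← qpow_add, add_neg_cancel, qpow_zero, one_smul]
  · rw [vermaBracket, Pi.single_eq_of_ne hkj, smul_zero]

lemma cartanRelations_verma (c : KKˣ) :
    CartanRelations C (vermaRaising C c) (fun j => LinearMap.mulLeft KK (FreeAlgebra.ι KK j))
      (vermaTorus C c) where
  commute_t := commute_vermaTorus C c
  conj_e i j := unitConj_eq_smul_iff.mpr (vermaTorus_mul_vermaRaising C c i j)
  conj_f i j := unitConj_eq_smul_iff.mpr (LinearMap.ext fun x => torusAction_ι_mul _ j x)
  bracket_self i := by
    refine LinearMap.ext fun x => ?_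
    rw [LinearMap.sub_apply, Module.End.mul_apply, Module.End.mul_apply, LinearMap.mulLeft_apply,
      LinearMap.mulLeft_apply, vermaRaising, bracketLift_ι_mul, add_sub_cancel_left, vermaBracket,
      Pi.single_eq_same]
  commute_e_f i j hij := by
    refine LinearMap.ext fun x => ?_
    rw [Module.End.mul_apply, Module.End.mul_apply, LinearMap.mulLeft_apply,
      LinearMap.mulLeft_apply, vermaRaising, bracketLift_ι_mul, vermaBracket,
      Pi.single_eq_of_ne hij.symm, LinearMap.zero_apply, add_zero]

lemma serreElement_vermaRaising (c : KKˣ) {i j : ι} (hij : i ≠ j) :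
    serreElement C (vermaRaising C c) i j = 0 :=
  eq_zero_of_commute_mulLeft (serreElement_apply_eq_zero C (fun _ => bracketLift_one _) i j)
    ((cartanRelations_verma C c).swap.commute_serreElement hij)

lemma serreSubmodule_le_comap_vermaBracket (c : KKˣ) (i j : ι) :
    serreSubmodule C ≤ (serreSubmodule C).comap (vermaBracket C c i j) := by
  intro x hx
  rw [Submodule.mem_comap, vermaBracket]
  rcases eq_or_ne j i with rfl | hji
  · rw [Pi.single_eq_same]
    exact Submodule.smul_mem _ _ (Submodule.sub_mem _ (serreSubmodule_le_comap_torusAction C _ hx)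
      (serreSubmodule_le_comap_vermaTorus_inv C c j hx))
  · rw [Pi.single_eq_of_ne hji]
    exact Submodule.zero_mem _

lemma serreSubmodule_le_comap_vermaRaising (c : KKˣ) (i : ι) :
    serreSubmodule C ≤ (serreSubmodule C).comap (vermaRaising C c i) := by
  refine serreSubmodule_le fun k l hkl x y => ?_
  rw [mul_assoc]
  refine mem_of_one_mem_of_ι_mul_mem (S := (serreSubmodule C).comap (vermaRaising C c i ∘ₗ
    LinearMap.mulRight KK (serreElement C (FreeAlgebra.ι KK) k l * y))) ?_ ?_ x
  · have comm := LinearMap.congr_fun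
      ((cartanRelations_verma C c).commute_serreElement hkl i).eq y
    rw [serreElement_mulLeft] at comm
    rw [Submodule.mem_comap, LinearMap.comp_apply, LinearMap.mulRight_apply, one_mul]
    have mem := mul_serreElement_mul_mem (C := C) hkl 1 (vermaRaising C c i y)
    rw [one_mul] at mem
    exact comm ▸ mem
  · intro j z hz
    rw [Submodule.mem_comap, LinearMap.comp_apply, LinearMap.mulRight_apply] at hz ⊢
    rw [mul_assoc, vermaRaising, bracketLift_ι_mul]
    refine Submodule.add_mem _ (serreSubmodule_le_comap_mulLeft C _ hz)
      (serreSubmodule_le_comap_vermaBracket C c i j ?_)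
    rw [← mul_assoc]
    exact mul_serreElement_mul_mem hkl z y

end VermaModule

section VermaRepresentation

variable {ι : Type} [DecidableEq ι] (C : CartanData ι)

/-- The action of the free algebra on all generators of `U_q(𝔤)` on the Verma module. -/
def vermaAction (c : KKˣ) : FA ι →ₐ[KK] Module.End KK (FreeAlgebra KK ι) :=
  FreeAlgebra.lift KK fun
    | QGen.e i => vermaRaising C c i
    | QGen.f i => LinearMap.mulLeft KK (FreeAlgebra.ι KK i)
    | QGen.t i => vermaTorus C c i
    | QGen.tinv i => ↑(vermaTorus C c i)⁻¹

section Generators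

variable (c : KKˣ) (i : ι)

lemma vermaAction_ge : vermaAction C c (ge i) = vermaRaising C c i :=
  FreeAlgebra.lift_ι_apply _ _

lemma vermaAction_gf :
    vermaAction C c (gf i) = LinearMap.mulLeft KK (FreeAlgebra.ι KK i) :=
  FreeAlgebra.lift_ι_apply _ _

lemma vermaAction_gT : vermaAction C c (gT i) = vermaTorus C c i :=
  FreeAlgebra.lift_ι_apply _ _

lemma vermaAction_gTinv : vermaAction C c (gTinv i) = ↑(vermaTorus C c i)⁻¹ :=
  FreeAlgebra.lift_ι_apply _ _

end Generators

lemma serreSubmodule_le_comap_vermaAction (c : KKˣ) (u : FA ι) :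
    serreSubmodule C ≤ (serreSubmodule C).comap (vermaAction C c u) := by
  induction u using FreeAlgebra.induction with
  | grade0 r =>
    rw [AlgHom.commutes]
    exact fun x hx => Submodule.smul_mem _ r hx
  | grade1 g =>
    rw [vermaAction, FreeAlgebra.lift_ι_apply]
    cases g with
    | e i => exact serreSubmodule_le_comap_vermaRaising C c i
    | f i => exact serreSubmodule_le_comap_mulLeft C _
    | t i => exact serreSubmodule_le_comap_torusAction C _
    | tinv i => exact serreSubmodule_le_comap_vermaTorus_inv C c i
  | mul a b iha ihb =>
    rw [map_mul]
    exact fun x hx => iha (ihb hx)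
  | add a b iha ihb =>
    rw [map_add]
    exact fun x hx => (serreSubmodule C).add_mem (iha hx) (ihb hx)

lemma vermaAction_serreE (c : KKˣ) {i j : ι} (hij : i ≠ j) :
    vermaAction C c (serreE C i j) = 0 := by
  change vermaAction C c (serreElement C ge i j) = 0
  rw [map_serreElement]
  simp only [vermaAction_ge]
  exact serreElement_vermaRaising C c hij

lemma vermaAction_serreF (c : KKˣ) (i j : ι) : vermaAction C c (serreF C i j) =
    LinearMap.mulLeft KK (serreElement C (FreeAlgebra.ι KK) i j) := by
  change vermaAction C c (serreElement C gf i j) = _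
  rw [map_serreElement, ← serreElement_mulLeft]
  simp only [vermaAction_gf]

lemma vermaAction_bracket (c : KKˣ) (i j : ι) :
    vermaAction C c (ge i * gf j - gf j * ge i) = vermaAction C c
      (if i = j then (qpow (C.d i) - qpow (-C.d i))⁻¹ • (gT i - gTinv i) else 0) := by
  have h := cartanRelations_verma C c
  rw [map_sub, map_mul, map_mul, vermaAction_ge, vermaAction_gf]
  split_ifs with hij
  · subst hij
    rw [h.bracket_self, map_smul, map_sub, vermaAction_gT, vermaAction_gTinv]
  · rw [map_zero, (h.commute_e_f i j hij).eq, sub_self]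

lemma vermaAction_sub_mem_serreSubmodule (c : KKˣ) {u v : FA ι} (huv : QRel C u v)
    (x : FreeAlgebra KK ι) : vermaAction C c u x - vermaAction C c v x ∈ serreSubmodule C := by
  have h := cartanRelations_verma C c
  have mem_of_eq (heq : vermaAction C c u = vermaAction C c v) :
      vermaAction C c u x - vermaAction C c v x ∈ serreSubmodule C := by
    rw [heq, sub_self]
    exact Submodule.zero_mem _
  cases huv with
  | t_tinv i =>
    exact mem_of_eq (by rw [map_mul, vermaAction_gT, vermaAction_gTinv, Units.mul_inv, map_one])
  | tinv_t i =>
    exact mem_of_eq (by rw [map_mul, vermaAction_gT, vermaAction_gTinv, Units.inv_mul, map_one])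
  | t_t i j =>
    exact mem_of_eq (by
      rw [map_mul, map_mul, vermaAction_gT, vermaAction_gT, (h.commute_t i j).eq])
  | t_tinv_comm i j =>
    exact mem_of_eq (by
      rw [map_mul, map_mul, vermaAction_gT, vermaAction_gTinv,
        (h.commute_t i j).units_inv_right.eq])
  | t_e i j =>
    exact mem_of_eq (by
      rw [map_smul, map_mul, map_mul, vermaAction_gT, vermaAction_ge,
        unitConj_eq_smul_iff.mp (h.conj_e i j)])
  | t_f i j =>
    exact mem_of_eq (by
      rw [map_smul, map_mul, map_mul, vermaAction_gT, vermaAction_gf,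
        unitConj_eq_smul_iff.mp (h.conj_f i j)])
  | e_f i j => exact mem_of_eq (vermaAction_bracket C c i j)
  | serre_e i j hij => exact mem_of_eq (by rw [vermaAction_serreE C c hij, map_zero])
  | serre_f i j hij =>
    rw [vermaAction_serreF, map_zero, LinearMap.zero_apply, sub_zero, LinearMap.mulLeft_apply]
    simpa only [one_mul] using mul_serreElement_mul_mem hij 1 x

/-- The Verma module of `U_q(𝔤)` whose vacuum has `t_i`-weight `c` for all `i`. -/
def vermaRep (c : KKˣ) :
    Uq C →ₐ[KK] Module.End KK (FreeAlgebra KK ι ⧸ serreSubmodule C) :=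
  RingQuot.liftAlgHom KK
    ⟨quotientRep (vermaAction C c) _ (serreSubmodule_le_comap_vermaAction C c), fun _ _ huv =>
      Submodule.linearMap_qext _ (LinearMap.ext fun x =>
        (Submodule.Quotient.eq _).mpr (vermaAction_sub_mem_serreSubmodule C c huv x))⟩

lemma vermaRep_uMk (c : KKˣ) (u : FA ι) (x : FreeAlgebra KK ι) :
    vermaRep C c (uMk C u) ((serreSubmodule C).mkQ x) =
      (serreSubmodule C).mkQ (vermaAction C c u x) := by
  rw [vermaRep, uMk, RingQuot.liftAlgHom_mkAlgHom_apply, quotientRep_mkQ]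

variable {C} in
lemma uMk_eq {u v : FA ι} (huv : QRel C u v) : uMk C u = uMk C v :=
  RingQuot.mkAlgHom_rel KK huv

/-- The map from the free algebra on the `f_j` onto `U_q⁻(𝔤)`. -/
def negMap : FreeAlgebra KK ι →ₐ[KK] Uq C := FreeAlgebra.lift KK (uF C)

lemma range_negMap : (negMap C).range = Uneg C :=
  (Algebra.adjoin_range_eq_range_freeAlgebra_lift KK _ (uF C)).symm

lemma negMap_eq_zero {x : FreeAlgebra KK ι} (hx : x ∈ serreSubmodule C) : negMap C x = 0 := by
  refine LinearMap.mem_ker.mp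
    (serreSubmodule_le (S := LinearMap.ker (negMap C).toLinearMap) (fun i j hij u v => ?_) hx)
  have negMap_serre : negMap C (serreElement C (FreeAlgebra.ι KK) i j) = 0 := by
    have serre_rel : uMk C (serreElement C gf i j) = 0 :=
      (uMk_eq (QRel.serre_f i j hij)).trans (map_zero _)
    rw [map_serreElement] at serre_rel ⊢
    simpa only [negMap, FreeAlgebra.lift_ι_apply, uF] using serre_rel
  rw [LinearMap.mem_ker, AlgHom.toLinearMap_apply, map_mul, map_mul, negMap_serre, mul_zero,
    zero_mul]

lemma vermaRep_negMap (c : KKˣ) (x y : FreeAlgebra KK ι) :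
    vermaRep C c (negMap C x) ((serreSubmodule C).mkQ y) = (serreSubmodule C).mkQ (x * y) := by
  induction x using FreeAlgebra.induction generalizing y with
  | grade0 r => rw [AlgHom.commutes, AlgHom.commutes, Module.algebraMap_end_apply, ← map_smul,
      Algebra.smul_def]
  | grade1 i =>
    rw [negMap, FreeAlgebra.lift_ι_apply, uF, vermaRep_uMk, vermaAction_gf,
      LinearMap.mulLeft_apply]
  | mul a b iha ihb => rw [map_mul, map_mul, Module.End.mul_apply, ihb, iha, mul_assoc]
  | add a b iha ihb => rw [map_add, map_add, LinearMap.add_apply, ihb, iha, ← map_add, add_mul]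

/-- `t_i` as a unit of `U_q(𝔤)`. -/
def uTUnit (i : ι) : (Uq C)ˣ where
  val := uT C i
  inv := uTinv C i
  val_inv := (map_mul ..).symm.trans ((uMk_eq (QRel.t_tinv i)).trans (map_one _))
  inv_val := (map_mul ..).symm.trans ((uMk_eq (QRel.tinv_t i)).trans (map_one _))

lemma sq_smul_add_mem_serreSubmodule (c : KKˣ) {i : ι} {x y : FreeAlgebra KK ι} {z : Uq C}
    (h : negMap C x * (uTUnit C i : Uq C) ^ 2 + negMap C y = z * uE C i) :
    (c ^ 2 : KK) • x + y ∈ serreSubmodule C := by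
  have act_t : vermaRep C c (uTUnit C i) ((serreSubmodule C).mkQ 1) =
      (c : KK) • (serreSubmodule C).mkQ 1 := by
    refine (vermaRep_uMk C c (gT i) 1).trans ?_
    rw [vermaAction_gT, ← map_smul]
    exact congrArg _ (torusAction_one _)
  have act_e : vermaRep C c (uE C i) ((serreSubmodule C).mkQ 1) = 0 := by
    rw [uE, vermaRep_uMk, vermaAction_ge, vermaRaising, bracketLift_one, map_zero]
  have act_h := sq_smul_apply_add_apply_eq_zero (vermaRep C c) act_t act_e h
  rw [vermaRep_negMap, vermaRep_negMap, mul_one, mul_one, ← map_smul, ← map_add] at act_h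
  exact (Submodule.Quotient.mk_eq_zero _).mp act_h

lemma torusIndependent_Uneg (i : ι) : TorusIndependent (uE C i) (uTUnit C i) (Uneg C) := by
  rw [← range_negMap]
  rintro _ ⟨x, rfl⟩ _ ⟨y, rfl⟩ z h
  have add_mem : x + y ∈ serreSubmodule C := by
    simpa using sq_smul_add_mem_serreSubmodule C 1 h
  have qpow_smul_add_mem :=
    sq_smul_add_mem_serreSubmodule C (Units.mk0 (qpow 1) (qpow_ne_zero 1)) h
  have x_mem : x ∈ serreSubmodule C := by
    have diff_mem := Submodule.sub_mem _ qpow_smul_add_mem add_mem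
    rw [add_sub_add_right_eq_sub, Units.val_mk0, qpow_pow] at diff_mem
    nth_rw 2 [← one_smul KK x] at diff_mem
    rw [← sub_smul] at diff_mem
    exact (Submodule.smul_mem_iff _ (sub_ne_zero.mpr (qpow_ne_one (by norm_num)))).mp diff_mem
  exact ⟨negMap_eq_zero C x_mem,
    negMap_eq_zero C ((Submodule.add_mem_iff_right _ x_mem).mp add_mem)⟩

end VermaRepresentation

section RankOneBraidStable

variable {A : Type*} [Ring A] [Algebra KK A] {d : ℤ} {c : KK} {e f : A} {t : Aˣ} {S : Set A}
  {T : A ≃ₐ[KK] A}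

lemma neg_fAdjoint_inv_unitConj (f : A) (t : Aˣ) (u : A) :
    -fAdjoint f t⁻¹ (unitConj t u) = u * f - f * t * u * ↑t⁻¹ := by
  rw [fAdjoint_apply, unitConj_inv_unitConj, unitConj_apply, neg_sub]
  simp only [mul_assoc]

lemma neg_eAdjoint_inv (e : A) (t : Aˣ) (u : A) :
    -eAdjoint e t⁻¹ u = u * e * ↑t⁻¹ - e * u * ↑t⁻¹ := by
  rw [eAdjoint_apply, sub_mul, neg_sub]

lemma twistedDividedPower_one_eq (d : ℤ) (f y : A) (k : ℕ) :
    twistedDividedPower d 1 f y k = ∑ r ∈ Finset.range (k + 1), ((-1) ^ r * qpow (d * r)) •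
      (dividedPower d f (k - r) * y * dividedPower d f r) := by
  simp only [twistedDividedPower, mul_one]
  exact Finset.Nat.sum_antidiagonal_eq_sum_range_succ
    (fun a b => ((-1) ^ a * qpow (d * a)) • (dividedPower d f b * y * dividedPower d f a)) k

namespace RankOneBraid

lemma of_map_eq (h : QuantumSl2 d e f t) (hd : d ≠ 0) (map_e : T e = -(↑t⁻¹ * f))
    (map_f : T f = -(e * t)) (map_t : T t = t * (↑t⁻¹ : A) ^ 2)
    (map_primitive : ∀ s ∈ S, ∃ m : ℕ, IsAdPrimitive d e t m s ∧
      T s = twistedDividedPower d 1 f s m) : RankOneBraid d 1 e f t S T where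
  map_e := by rw [map_e, inv_one, neg_one_smul]
  map_f := by rw [map_f, neg_one_smul]
  map_t := by rw [map_t, pow_two, Units.mul_inv_cancel_left]
  map_primitive s hs := by
    obtain ⟨m, hm, hTs⟩ := map_primitive s hs
    have pow_eq := fAdjoint_pow_eq hd h.conj_f hm.conj m
    rw [add_sub_cancel_left, ← hTs] at pow_eq
    exact ⟨m, hm, (qfact d m)⁻¹, inv_ne_zero (qfact_ne_zero hd m),
      (eq_inv_smul_iff₀ (qfact_ne_zero hd m)).mpr pow_eq.symm⟩

theorem adjoint_stable (hT : RankOneBraid d c e f t S T) (h : QuantumSl2 d e f t) (hd : d ≠ 0)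
    (hc : c ≠ 0) {N : Subalgebra KK A} (hN : N = Algebra.adjoin KK (insert f S))
    (hind : TorusIndependent e t N) {x : A} (hx : x ∈ N) (hTx : T.symm x ∈ N) :
    (fAdjoint f t x ∈ N ∧ T.symm (fAdjoint f t x) ∈ N) ∧
      (eAdjoint e t x ∈ N ∧ T.symm (eAdjoint e t x) ∈ N) := by
  subst hN
  exact ⟨⟨h.fAdjoint_mem_adjoin hT.isAdPrimitive hx, hT.symm_fAdjoint_mem h hd hc hind hx hTx⟩,
    hT.eAdjoint_mem h hc hind hx hTx, hT.symm_eAdjoint_mem h hc hTx⟩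

theorem adjoint_inv_stable (hT : RankOneBraid d c e f t S T) (h : QuantumSl2 d e f t) (hd : d ≠ 0)
    (hc : c ≠ 0) {N : Subalgebra KK A} (hN : N = Algebra.adjoin KK (insert f S))
    (hind : TorusIndependent e t N) {x : A} (hx : x ∈ N) (hTx : T x ∈ N) :
    (-fAdjoint f t⁻¹ (unitConj t x) ∈ N ∧ T (-fAdjoint f t⁻¹ (unitConj t x)) ∈ N) ∧
      (-eAdjoint e t⁻¹ x ∈ N ∧ T (-eAdjoint e t⁻¹ x) ∈ N) := by
  have hweight := h.isWeightVector_of_mem_insert hT.isAdPrimitive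
  have conj_mem : unitConj t x ∈ N := hN ▸ unitConj_mem_adjoin hweight (hN ▸ hx)
  have map_conj_mem : T (unitConj t x) ∈ N := by
    rw [hT.map_unitConj]
    exact hN ▸ unitConj_mem_adjoin (fun s hs => (hweight s hs).inv) (hN ▸ hTx)
  have stable {y : A} (hy : y ∈ N) (hTy : T y ∈ N) :=
    (hT.symm h hd hc).adjoint_stable h.inv (neg_ne_zero.mpr hd)
      (mul_ne_zero (qpow_ne_zero _) hc) hN (h.torusIndependent_inv hind) hy hTy
  rw [map_neg, map_neg, neg_mem_iff, neg_mem_iff, neg_mem_iff, neg_mem_iff]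
  exact ⟨(stable conj_mem map_conj_mem).1, (stable hx hTx).2⟩

end RankOneBraid
end RankOneBraidStable

section QuantumGroup

variable {ι : Type} [DecidableEq ι] (C : CartanData ι)

lemma cartanRelations_Uq : CartanRelations C (uE C) (uF C) (uTUnit C) where
  commute_t i j := (map_mul ..).symm.trans ((uMk_eq (QRel.t_t i j)).trans (map_mul ..))
  conj_e i j := unitConj_eq_smul_iff.mpr <| (map_mul ..).symm.trans <|
    (uMk_eq (QRel.t_e i j)).trans <| (map_smul ..).trans (congrArg _ (map_mul ..))
  conj_f i j := unitConj_eq_smul_iff.mpr <| (map_mul ..).symm.trans <|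
    (uMk_eq (QRel.t_f i j)).trans <| (map_smul ..).trans (congrArg _ (map_mul ..))
  bracket_self i := by
    have rel := uMk_eq (QRel.e_f (C := C) i i)
    rw [if_pos rfl, map_smul, map_sub, map_sub, map_mul, map_mul] at rel
    exact rel
  commute_e_f i j hij := by
    have rel := uMk_eq (QRel.e_f (C := C) i j)
    rw [if_neg hij, map_sub, map_mul, map_mul, map_zero] at rel
    exact sub_eq_zero.mp rel

lemma Uneg_eq_adjoin_insert (i : ι) :
    Uneg C = Algebra.adjoin KK (insert (uF C i) (uF C '' {j | j ≠ i})) := by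
  rw [Uneg, ← Set.image_insert_eq, ← Set.image_univ]
  congr 2
  ext j
  simp [em]

lemma adF_eq (i : ι) (u : Uq C) : adF C i u = fAdjoint (uF C i) (uTUnit C i) u := rfl

lemma adE_eq (i : ι) (u : Uq C) : adE C i u = eAdjoint (uE C i) (uTUnit C i) u :=
  (sub_mul ..).symm

lemma adFstar_eq (i : ι) (u : Uq C) :
    adFstar C i u = -fAdjoint (uF C i) (uTUnit C i)⁻¹ (unitConj (uTUnit C i) u) :=
  (neg_fAdjoint_inv_unitConj (uF C i) (uTUnit C i) u).symm

lemma adEstar_eq (i : ι) (u : Uq C) : adEstar C i u = -eAdjoint (uE C i) (uTUnit C i)⁻¹ u :=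
  (neg_eAdjoint_inv (uE C i) (uTUnit C i) u).symm

variable {C} in
lemma rankOneBraid_of_map_generators {i : ι} {T : Uq C ≃ₐ[KK] Uq C}
    (hTt : T (uT C i) = uT C i * tpow C i (-(C.a i i)))
    (hTe : T (uE C i) = -(uTinv C i * uF C i)) (hTf : T (uF C i) = -(uE C i * uT C i))
    (hTf' : ∀ j : ι, j ≠ i → T (uF C j) = ∑ r ∈ Finset.range ((-C.a i j).toNat + 1),
      ((-1 : KK) ^ r * qpow (C.d i * (r : ℤ))) •
        (uFdp C i ((-C.a i j).toNat - r) * uF C j * uFdp C i r)) :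
    RankOneBraid (C.d i) 1 (uE C i) (uF C i) (uTUnit C i) (uF C '' {j | j ≠ i}) T := by
  have h := cartanRelations_Uq C
  have map_t : T (uT C i) = uT C i * uTinv C i ^ 2 := by rw [hTt, C.a_diag]; rfl
  refine .of_map_eq (h.quantumSl2 i) (C.d_pos i).ne' hTe hTf map_t ?_
  rintro _ ⟨j, hji, rfl⟩
  have toNat_eq : ((-C.a i j).toNat : ℤ) = -C.a i j :=
    Int.toNat_of_nonneg (neg_nonneg.mpr (C.a_offdiag i j (Ne.symm hji)))
  exact ⟨(-C.a i j).toNat, toNat_eq ▸ h.isAdPrimitive (Ne.symm hji),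
    (hTf' j hji).trans (twistedDividedPower_one_eq ..).symm⟩

end QuantumGroup

/-- Let `U_i = U_q^-(𝔤) ∩ T_i(U_q^-(𝔤))` and `_iU = U_q^-(𝔤) ∩ T_i⁻¹(U_q^-(𝔤))`, where
`T_i` is Lusztig's braid automorphism (given on generators by the usual formulas).
Then `U_i` is stable under `ad_{f_i}` and `ad_{e_i}`, and `_iU` is stable under
`ad*_{f_i}` and `ad*_{e_i}`.  (Note `x ∈ T_i(U_q^-(𝔤)) ↔ T_i⁻¹ x ∈ U_q^-(𝔤)`, and
`x ∈ T_i⁻¹(U_q^-(𝔤)) ↔ T_i x ∈ U_q^-(𝔤)`.) -/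
theorem braid_intersections_stable_under_adjoint
    (I : Type) [DecidableEq I] (C : CartanData I) (i : I)
    (T : Uq C ≃ₐ[KK] Uq C)
    (hTt : ∀ j : I, T (uT C j) = uT C j * tpow C i (-(C.a i j)))
    (hTei : T (uE C i) = -(uTinv C i * uF C i))
    (hTfi : T (uF C i) = -(uE C i * uT C i))
    (hTe : ∀ j : I, j ≠ i → T (uE C j) =
      ∑ r ∈ Finset.range ((-C.a i j).toNat + 1),
        ((-1 : KK) ^ r * qpow (-(C.d i * (r : ℤ)))) •
          (uEdp C i r * uE C j * uEdp C i ((-C.a i j).toNat - r)))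
    (hTf : ∀ j : I, j ≠ i → T (uF C j) =
      ∑ r ∈ Finset.range ((-C.a i j).toNat + 1),
        ((-1 : KK) ^ r * qpow (C.d i * (r : ℤ))) •
          (uFdp C i ((-C.a i j).toNat - r) * uF C j * uFdp C i r)) :
    (∀ x : Uq C, x ∈ Uneg C → T.symm x ∈ Uneg C →
      (adF C i x ∈ Uneg C ∧ T.symm (adF C i x) ∈ Uneg C) ∧
      (adE C i x ∈ Uneg C ∧ T.symm (adE C i x) ∈ Uneg C)) ∧
    (∀ x : Uq C, x ∈ Uneg C → T x ∈ Uneg C →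
      (adFstar C i x ∈ Uneg C ∧ T (adFstar C i x) ∈ Uneg C) ∧
      (adEstar C i x ∈ Uneg C ∧ T (adEstar C i x) ∈ Uneg C)) := by
  have h := (cartanRelations_Uq C).quantumSl2 i
  have hT := rankOneBraid_of_map_generators (hTt i) hTei hTfi hTf
  have hN := Uneg_eq_adjoin_insert C i
  have hind := torusIndependent_Uneg C i
  have hd : C.d i ≠ 0 := (C.d_pos i).ne'
  refine ⟨fun x hx hTx => ?_, fun x hx hTx => ?_⟩
  · rw [adF_eq, adE_eq]
    exact hT.adjoint_stable h hd one_ne_zero hN hind hx hTx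
  · rw [adFstar_eq, adEstar_eq]
    exact hT.adjoint_inv_stable h hd one_ne_zero hN hind hx hTx

end
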